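/- arXiv:2411.13465 — 3 statements merged into one kernel-verified Lean document; each statement's English description precedes it below -/
import Mathlib

section
/- Let d ≥ 2 and let p be a probability mass function on ℤ with p(j) = p(−j) > 0 for every j ∈ ℤ and Σ_{j∈ℤ} j² p(j) < ∞. Let H be the almost-sure limit of the spherical averages H_r of the free height field with increment law p on the rooted Cayley tree of order d, and let f_H be the continuous density of the law of H obtained by Fourier inversion of its characteristic function. Then for every r₁ ≥ 1 there exists a nonempty open interval I ⊆ ℝ such that f_H( x + k/|W_{r₁}| ) > 0 for all x ∈ I and all k ∈ ℤ; consequently the topological support of the law of H is all of ℝ. -/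
open MeasureTheory ProbabilityTheory Filter Finset Topology

noncomputable section

/-- A non-root vertex of the rooted Cayley tree of order `d`: the first step from the
root is one of `d+1` children, every further step one of `d` children. -/
abbrev Vertex (d : ℕ) : Type := Fin (d + 1) × List (Fin d)

/-- depth of a non-root vertex -/
def vdepth {d : ℕ} (v : Vertex d) : ℕ := v.2.length + 1

/-- the sphere `W_r` of radius `r ≥ 1`: all vertices of depth `r` -/
def sphereW (d r : ℕ) : Finset (Vertex d) :=
  (Finset.univ : Finset (Fin (d + 1) × (Fin (r - 1) → Fin d))).image
    (fun x => (x.1, List.ofFn x.2))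

/-- height at `v`: sum of the increments along the path from the root to `v`
(the prefixes of length `0,…,|v.2|` of the step list of `v` enumerate that path). -/
def heightAt {d : ℕ} {Ω : Type*} (Y : Vertex d → Ω → ℝ) (v : Vertex d) (ω : Ω) : ℝ :=
  ∑ k ∈ Finset.range (v.2.length + 1), Y (v.1, v.2.take k) ω

/-- spherical average `H_r` of the heights at depth `r` -/
def sphAvg (d : ℕ) {Ω : Type*} (Y : Vertex d → Ω → ℝ) (r : ℕ) (ω : Ω) : ℝ :=
  (((d + 1) * d ^ (r - 1) : ℕ) : ℝ)⁻¹ * ∑ v ∈ sphereW d r, heightAt Y v ω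

/-!
Fix a vertex `v` at depth `r` and let `κ` be the law of `Y v / |W_r|`, whose atoms fill
`|W_r|⁻¹ ℤ`. Deleting `Y v` from the tree shifts the limit `H` by `Y v / |W_r|`, so the law of `H`
is `κ ∗ ν` for the law `ν` of an independent remainder. The density `f` of `κ ∗ ν` is formally
`∑ₛ κ {s} ν (dx - s)`. Comparing the weights `κ {s}` and `κ {t + s}` on the set where the latter is
at least `ε`, and using boundedness of `f` on the complement, gives
`f x ≤ ε⁻¹ f (t + x) + C κ {s | κ {t + s} < ε}` for a constant `C`. Letting `ε → 0` shows that `f`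
cannot vanish at `t + x` unless it vanishes at `x`: the translations preserving the set `{0 < f}`
form a subgroup of `ℝ` containing every `|W_r|⁻¹`. This subgroup is dense, hence so is the open
set `{0 < f}`.
-/

open scoped ENNReal Pointwise

section Convolution

variable {E : Type*} [AddGroup E] [MeasurableSpace E] [MeasurableAdd₂ E] {κ ν μ : Measure E}
  [SFinite ν]

theorem conv_apply_eq_lintegral {B : Set E} (hB : MeasurableSet B) :
    (κ ∗ ν) B = ∫⁻ s, ν ((s + ·) ⁻¹' B) ∂κ := by
  rw [Measure.conv, Measure.map_apply measurable_add hB, Measure.prod_apply (measurable_add hB)]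
  rfl

theorem measure_singleton_mul_le_conv [MeasurableSingletonClass E] (s : E) {A : Set E}
    (hA : MeasurableSet A) : κ {s} * ν A ≤ (κ ∗ ν) ((-s + ·) ⁻¹' A) := by
  calc κ {s} * ν A = ∫⁻ r in {s}, ν ((r + ·) ⁻¹' ((-s + ·) ⁻¹' A)) ∂κ := by
        simp [Set.preimage_preimage]
    _ ≤ ∫⁻ r, ν ((r + ·) ⁻¹' ((-s + ·) ⁻¹' A)) ∂κ := setLIntegral_le_lintegral _ _
    _ = (κ ∗ ν) ((-s + ·) ⁻¹' A) :=
        (conv_apply_eq_lintegral (measurable_const_add (-s) hA)).symm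

theorem setLIntegral_preimage_neg_add [μ.IsAddLeftInvariant] (f : E → ℝ≥0∞) (t : E) (B : Set E) :
    ∫⁻ x in (-t + ·) ⁻¹' B, f x ∂μ = ∫⁻ x in B, f (t + x) ∂μ := by
  rw [← (measurePreserving_add_left μ t).setLIntegral_comp_preimage_emb
    (measurableEmbedding_addLeft t), Set.preimage_preimage]
  simp only [neg_add_cancel_left, Set.preimage_id']

theorem measure_singleton_mul_le_setLIntegral [MeasurableSingletonClass E] [μ.IsAddLeftInvariant]
    {f : E → ℝ≥0∞} (hκν : κ ∗ ν = μ.withDensity f) {B : Set E} (hB : MeasurableSet B) (s r : E) :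
    κ {r} * ν ((s + ·) ⁻¹' B) ≤ ∫⁻ x in B, f (r + -s + x) ∂μ := by
  calc κ {r} * ν ((s + ·) ⁻¹' B) ≤ (κ ∗ ν) ((-r + ·) ⁻¹' ((s + ·) ⁻¹' B)) :=
        measure_singleton_mul_le_conv r (measurable_const_add s hB)
    _ = (μ.withDensity f) ((-(r + -s) + ·) ⁻¹' B) := by
        simp [hκν, Set.preimage_preimage, ← add_assoc]
    _ = ∫⁻ x in B, f (r + -s + x) ∂μ := by
        rw [withDensity_apply _ (measurable_const_add _ hB), setLIntegral_preimage_neg_add]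

end Convolution

section AtomWeights

variable {α : Type*} [MeasurableSpace α] {μ : Measure α}

theorem measurable_measure_singleton [MeasurableEq α] [SFinite μ] :
    Measurable fun s => μ {s} := by
  simpa [Set.preimage, Set.diagonal, eq_comm] using
    measurable_measure_prodMk_left (ν := μ) (measurableSet_diagonal (α := α))

theorem tendsto_measure_lt_inv_natCast [IsFiniteMeasure μ] {g : α → ℝ≥0∞} (hg : Measurable g)
    (hg0 : ∀ᵐ x ∂μ, g x ≠ 0) :
    Tendsto (fun n : ℕ => μ {x | g x < (n : ℝ≥0∞)⁻¹}) atTop (𝓝 0) := by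
  have hnull : μ (⋂ n : ℕ, {x | g x < (n : ℝ≥0∞)⁻¹}) = 0 := by
    refine measure_mono_null (t := {x | g x = 0}) (fun x hx => ?_) (by simpa [ae_iff] using hg0)
    by_contra hx0
    obtain ⟨n, hn⟩ := ENNReal.exists_inv_nat_lt hx0
    exact (Set.mem_iInter.1 hx n).not_gt hn
  rw [← hnull]
  refine tendsto_measure_iInter_atTop
    (fun n => (measurableSet_lt hg measurable_const).nullMeasurableSet) (fun m n hmn x hx => ?_)
    ⟨0, measure_ne_top _ _⟩
  exact lt_of_lt_of_le hx (ENNReal.inv_le_inv.2 (by exact_mod_cast hmn))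

end AtomWeights

section ConvolutionDensity

variable {E : Type*} [AddGroup E] [MeasurableSpace E] {κ ν μ : Measure E} [IsFiniteMeasure κ]
  [SFinite ν] [μ.IsAddLeftInvariant] {f : E → ℝ≥0∞} {C : ℝ≥0∞}

theorem setLIntegral_le_of_conv_eq_withDensity [MeasurableAdd₂ E] [MeasurableEq E]
    (hκν : κ ∗ ν = μ.withDensity f) (hC : ∀ x, f x ≤ C) {a : E} (ha : κ {a} ≠ 0) (t : E)
    {ε : ℝ≥0∞} (hε : ε ≠ 0) {B : Set E} (hB : MeasurableSet B) :
    ∫⁻ x in B, f x ∂μ ≤ κ .univ / ε * ∫⁻ x in B, f (t + x) ∂μ +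
      C / κ {a} * κ {s | κ {t + s} < ε} * μ B := by
  have hlarge (s : E) (hs : ε ≤ κ {t + s}) :
      ν ((s + ·) ⁻¹' B) ≤ ε⁻¹ * ∫⁻ x in B, f (t + x) ∂μ := by
    calc ν ((s + ·) ⁻¹' B) ≤ (κ {t + s})⁻¹ * ∫⁻ x in B, f (t + x) ∂μ := by
          rw [← ENNReal.mul_le_iff_le_inv (hε.bot_lt.trans_le hs).ne' (measure_ne_top κ _)]
          simpa only [add_neg_cancel_right] using
            measure_singleton_mul_le_setLIntegral hκν hB s (t + s)
      _ ≤ ε⁻¹ * ∫⁻ x in B, f (t + x) ∂μ := by gcongr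
  have hbdd (s : E) : ν ((s + ·) ⁻¹' B) ≤ C / κ {a} * μ B := by
    rw [ENNReal.div_eq_inv_mul, mul_assoc, ← ENNReal.mul_le_iff_le_inv ha (measure_ne_top κ _)]
    calc κ {a} * ν ((s + ·) ⁻¹' B) ≤ ∫⁻ x in B, f (a + -s + x) ∂μ :=
          measure_singleton_mul_le_setLIntegral hκν hB s a
      _ ≤ ∫⁻ _ in B, C ∂μ := lintegral_mono fun x => hC _
      _ = C * μ B := setLIntegral_const B C
  set A := {s | κ {t + s} < ε}
  have hA : MeasurableSet A :=
    measurableSet_lt (measurable_measure_singleton.comp (measurable_const_add t)) measurable_const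
  calc ∫⁻ x in B, f x ∂μ = ∫⁻ s, ν ((s + ·) ⁻¹' B) ∂κ := by
        rw [← withDensity_apply _ hB, ← hκν, conv_apply_eq_lintegral hB]
    _ = ∫⁻ s in Aᶜ, ν ((s + ·) ⁻¹' B) ∂κ + ∫⁻ s in A, ν ((s + ·) ⁻¹' B) ∂κ := by
        rw [add_comm, lintegral_add_compl _ hA]
    _ ≤ ∫⁻ _ in Aᶜ, ε⁻¹ * ∫⁻ x in B, f (t + x) ∂μ ∂κ + ∫⁻ _ in A, C / κ {a} * μ B ∂κ :=
        add_le_add (setLIntegral_mono' hA.compl fun s hs => hlarge s (not_lt.1 hs))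
          (lintegral_mono hbdd)
    _ = κ Aᶜ / ε * ∫⁻ x in B, f (t + x) ∂μ + C / κ {a} * κ A * μ B := by
        simp only [setLIntegral_const, ENNReal.div_eq_inv_mul]
        ring
    _ ≤ κ .univ / ε * ∫⁻ x in B, f (t + x) ∂μ + C / κ {a} * κ A * μ B := by
        gcongr
        exact Set.subset_univ _

variable [TopologicalSpace E] [ContinuousAdd E] [T2Space E] [SecondCountableTopology E]
  [BorelSpace E] [SigmaFinite μ] [μ.IsOpenPosMeasure]

theorem le_of_conv_eq_withDensity (hκν : κ ∗ ν = μ.withDensity f) (hf : Continuous f)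
    (hC : ∀ x, f x ≤ C) {a : E} (ha : κ {a} ≠ 0) (t : E) {ε : ℝ≥0∞} (hε : ε ≠ 0) (x : E) :
    f x ≤ κ .univ / ε * f (t + x) + C / κ {a} * κ {s | κ {t + s} < ε} := by
  set M := κ .univ / ε
  set D := C / κ {a} * κ {s | κ {t + s} < ε}
  have hM : M ≠ ∞ := ENNReal.div_ne_top (measure_ne_top κ _) hε
  have hft : Continuous fun x => M * f (t + x) :=
    (ENNReal.continuous_const_mul hM).comp (hf.comp (continuous_const_add t))
  have hae : ∀ᵐ x ∂μ, f x ≤ M * f (t + x) + D := by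
    refine ae_le_of_forall_setLIntegral_le_of_sigmaFinite hf.measurable fun B hB _ => ?_
    rw [lintegral_add_left hft.measurable, lintegral_const_mul' _ _ hM, setLIntegral_const]
    exact setLIntegral_le_of_conv_eq_withDensity hκν hC ha t hε hB
  have hclosed : IsClosed {x | f x ≤ M * f (t + x) + D} :=
    isClosed_le hf (hft.add continuous_const)
  exact hclosed.closure_subset_iff.2 subset_rfl (Measure.dense_of_ae hae x)

theorem ne_zero_add_of_conv_eq_withDensity [NeZero κ] (hκν : κ ∗ ν = μ.withDensity f)
    (hf : Continuous f) (hC : ∀ x, f x ≤ C) (hC_top : C ≠ ∞) {t : E}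
    (ht : ∀ᵐ s ∂κ, κ {t + s} ≠ 0) {x : E} (hx : f x ≠ 0) : f (t + x) ≠ 0 := by
  intro htx
  obtain ⟨s, hs⟩ := ht.exists
  have hlim : Tendsto (fun n : ℕ => C / κ {t + s} * κ {s | κ {t + s} < (n : ℝ≥0∞)⁻¹})
      atTop (𝓝 0) := by
    simpa using ENNReal.Tendsto.const_mul (tendsto_measure_lt_inv_natCast
      (measurable_measure_singleton.comp (measurable_const_add t)) ht)
      (.inr (ENNReal.div_ne_top hC_top hs))
  refine hx (le_zero_iff.1 (ge_of_tendsto' hlim fun n => ?_))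
  simpa [htx] using le_of_conv_eq_withDensity hκν hf hC hs t (ε := (n : ℝ≥0∞)⁻¹) (by simp) x

theorem mem_stabilizer_support_of_conv_eq_withDensity [NeZero κ]
    (hκν : κ ∗ ν = μ.withDensity f) (hf : Continuous f) (hC : ∀ x, f x ≤ C) (hC_top : C ≠ ∞)
    {t : E} (ht : ∀ᵐ s ∂κ, κ {t + s} ≠ 0) (ht_neg : ∀ᵐ s ∂κ, κ {-t + s} ≠ 0) :
    t ∈ AddAction.stabilizer E (Function.support f) :=
  AddAction.mem_stabilizer_set.2 fun x =>
    ⟨fun h => by simpa using ne_zero_add_of_conv_eq_withDensity hκν hf hC hC_top ht_neg h,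
      ne_zero_add_of_conv_eq_withDensity hκν hf hC hC_top ht⟩

end ConvolutionDensity

section DenseSupport

variable {E : Type*} [TopologicalSpace E]

theorem dense_of_dense_stabilizer [AddGroup E] [ContinuousAdd E] {s : Set E} (hs : s.Nonempty)
    (h : Dense (AddAction.stabilizer E s : Set E)) : Dense s := by
  obtain ⟨x, hx⟩ := hs
  let e : E ≃ₜ E := Homeomorph.addRight x
  refine (e.surjective.denseRange.dense_image e.continuous h).mono ?_
  rintro _ ⟨t, ht, rfl⟩
  exact (AddAction.mem_stabilizer_set.1 ht x).2 hx

theorem isOpenPosMeasure_withDensity [MeasurableSpace E] [OpensMeasurableSpace E] {μ : Measure E}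
    [μ.IsOpenPosMeasure] {f : E → ℝ≥0∞} (hf : Continuous f)
    (hdense : Dense (Function.support f)) : (μ.withDensity f).IsOpenPosMeasure where
  open_pos U hU hne := by
    rw [Ne, withDensity_apply_eq_zero hf.measurable]
    refine (hf.isOpen_support.inter hU).measure_ne_zero μ ?_
    rw [Set.inter_comm]
    exact hdense.inter_open_nonempty U hU hne

end DenseSupport

section FourierIntegral

theorem continuous_vectorFourierIntegral {V W : Type*} [AddCommGroup V] [Module ℝ V]
    [TopologicalSpace V] [MeasurableSpace V] [BorelSpace V] [AddCommGroup W] [Module ℝ W]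
    [TopologicalSpace W] [FirstCountableTopology W] {e : AddChar ℝ Circle} {μ : Measure V}
    {L : V →ₗ[ℝ] W →ₗ[ℝ] ℝ} (he : Continuous e) (hL : Continuous fun p : V × W => L p.1 p.2)
    (φ : V → ℂ) : Continuous (VectorFourier.fourierIntegral e μ L φ) := by
  by_cases hφ : Integrable φ μ
  · exact VectorFourier.fourierIntegral_continuous he hL hφ
  · have hzero : VectorFourier.fourierIntegral e μ L φ = 0 := by
      ext w
      exact integral_undef (mt (VectorFourier.fourierIntegral_convergent_iff he hL w).1 hφ)
    exact hzero ▸ continuous_zero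

theorem continuous_and_bddAbove_of_eq_fourierIntegral {φ : ℝ → ℂ} {f : ℝ → ℝ} {c : ℂ}
    (hf : ∀ x : ℝ, (f x : ℂ) = c * ∫ t : ℝ, Complex.exp (-(Complex.I * t * x)) * φ t) :
    Continuous f ∧ BddAbove (Set.range f) := by
  set F := VectorFourier.fourierIntegral Real.probChar volume (LinearMap.mul ℝ ℝ) φ with hF
  have hfF (x : ℝ) : f x = (c * F x).re := by
    rw [hF, VectorFourier.fourierIntegral_probChar, ← Complex.ofReal_re (f x), hf]
    simp [mul_comm, mul_left_comm]
  have hF_cont : Continuous F :=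
    continuous_vectorFourierIntegral Real.continuous_probChar (by simpa using continuous_mul) φ
  constructor
  · simp only [funext hfF]
    fun_prop
  · refine ⟨‖c‖ * ∫ t, ‖φ t‖, Set.forall_mem_range.2 fun x => ?_⟩
    calc f x = (c * F x).re := hfF x
      _ ≤ ‖c * F x‖ := Complex.re_le_norm _
      _ = ‖c‖ * ‖F x‖ := norm_mul _ _
      _ ≤ ‖c‖ * ∫ t, ‖φ t‖ := by
        gcongr
        exact VectorFourier.norm_fourierIntegral_le_integral_norm _ _ _ _ _

end FourierIntegral

section Tree

variable {d : ℕ}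

/-- The `c`-th child of a non-root vertex `v`; the step list records the path from the root, so
the new step is appended at its end. -/
def child (v : Vertex d) (c : Fin d) : Vertex d := (v.1, v.2 ++ [c])

theorem sum_sphereW (r : ℕ) (F : Vertex d → ℝ) :
    ∑ v ∈ sphereW d r, F v =
      ∑ i : Fin (d + 1), ∑ g : Fin (r - 1) → Fin d, F (i, List.ofFn g) := by
  rw [sphereW, Finset.sum_image, Fintype.sum_prod_type]
  rintro ⟨i, g⟩ - ⟨j, h⟩ - hgh
  simpa only [Prod.mk.injEq, List.ofFn_inj] using hgh

theorem card_sphereW (d r : ℕ) : #(sphereW d r) = (d + 1) * d ^ (r - 1) := by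
  have h : (#(sphereW d r) : ℝ) = ((d + 1) * d ^ (r - 1) : ℕ) := by
    simpa using sum_sphereW (d := d) r fun _ => 1
  exact_mod_cast h

theorem mem_sphereW {r : ℕ} (hr : 1 ≤ r) {v : Vertex d} : v ∈ sphereW d r ↔ vdepth v = r := by
  obtain ⟨i, l⟩ := v
  simp only [sphereW, Finset.mem_image, Finset.mem_univ, true_and, vdepth, Prod.mk.injEq]
  constructor
  · rintro ⟨⟨j, g⟩, -, rfl⟩
    rw [List.length_ofFn, Nat.sub_add_cancel hr]
  · rintro rfl
    exact ⟨(i, l.get), rfl, List.ofFn_get l⟩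

theorem exists_vdepth_eq (hd : d ≠ 0) {r : ℕ} (hr : 1 ≤ r) : ∃ v : Vertex d, vdepth v = r :=
  ⟨(0, List.replicate (r - 1) ⟨0, hd.bot_lt⟩), by
    rw [vdepth, List.length_replicate, Nat.sub_add_cancel hr]⟩

theorem sum_sphereW_succ {r : ℕ} (hr : 1 ≤ r) (F : Vertex d → ℝ) :
    ∑ v ∈ sphereW d (r + 1), F v = ∑ v ∈ sphereW d r, ∑ c, F (child v c) := by
  obtain ⟨n, rfl⟩ := Nat.exists_eq_add_of_le' hr
  rw [sum_sphereW, sum_sphereW]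
  refine Finset.sum_congr rfl fun i _ => ?_
  change ∑ g : Fin (n + 1) → Fin d, F (i, List.ofFn g) =
    ∑ g : Fin n → Fin d, ∑ c, F (child (i, List.ofFn g) c)
  rw [← (Fin.snocEquiv fun _ => Fin d).sum_comp, Fintype.sum_prod_type, Finset.sum_comm]
  refine Finset.sum_congr rfl fun g _ => Finset.sum_congr rfl fun c _ => ?_
  rw [List.ofFn_succ_last]
  simp [Fin.snocEquiv, child]

theorem dense_of_inv_card_sphereW_mem (hd : 2 ≤ d) {S : AddSubgroup ℝ}
    (hS : ∀ r, 1 ≤ r → (#(sphereW d r) : ℝ)⁻¹ ∈ S) : Dense (S : Set ℝ) := by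
  refine S.dense_of_not_isolated_zero fun ε hε => ?_
  obtain ⟨n, hn⟩ := pow_unbounded_of_one_lt ε⁻¹ (Nat.one_lt_cast.2 hd : (1 : ℝ) < d)
  have hcard : ε⁻¹ < #(sphereW d (n + 1)) := by
    refine hn.trans_le ?_
    rw [card_sphereW, Nat.add_sub_cancel]
    exact_mod_cast Nat.le_mul_of_pos_left _ d.succ_pos
  exact ⟨_, hS (n + 1) n.succ_pos, inv_pos.2 ((inv_pos.2 hε).trans hcard),
    inv_lt_of_inv_lt₀ hε hcard⟩

variable {Ω : Type*} (Y : Vertex d → Ω → ℝ) (ω : Ω)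

theorem heightAt_child (v : Vertex d) (c : Fin d) :
    heightAt Y (child v c) ω = heightAt Y v ω + Y (child v c) ω := by
  simp only [heightAt, child, List.length_append, List.length_singleton]
  rw [Finset.sum_range_succ]
  congr 1
  · refine Finset.sum_congr rfl fun k hk => ?_
    rw [List.take_append_of_le_length (Nat.lt_succ_iff.1 (Finset.mem_range.1 hk))]
  · rw [List.take_of_length_le (by simp)]

theorem sphAvg_eq_inv_card_mul (r : ℕ) :
    sphAvg d Y r ω = (#(sphereW d r) : ℝ)⁻¹ * ∑ v ∈ sphereW d r, heightAt Y v ω := by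
  rw [card_sphereW, sphAvg]

theorem sphAvg_succ (hd : d ≠ 0) {r : ℕ} (hr : 1 ≤ r) :
    sphAvg d Y (r + 1) ω = sphAvg d Y r ω +
      (#(sphereW d (r + 1)) : ℝ)⁻¹ * ∑ v ∈ sphereW d (r + 1), Y v ω := by
  have hcard : #(sphereW d (r + 1)) = d * #(sphereW d r) := by
    obtain ⟨n, rfl⟩ := Nat.exists_eq_add_of_le' hr
    simp only [card_sphereW, Nat.add_sub_cancel]
    ring
  have hsum : ∑ v ∈ sphereW d (r + 1), heightAt Y v ω =
      d * ∑ v ∈ sphereW d r, heightAt Y v ω + ∑ v ∈ sphereW d (r + 1), Y v ω := by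
    simp only [sum_sphereW_succ hr, heightAt_child, Finset.sum_add_distrib, Finset.sum_const,
      Finset.card_univ, Fintype.card_fin, nsmul_eq_mul, Finset.mul_sum]
  rw [sphAvg_eq_inv_card_mul, sphAvg_eq_inv_card_mul, hsum, hcard]
  push_cast
  field_simp

theorem sphAvg_succ_eq_sum (hd : d ≠ 0) (n : ℕ) :
    sphAvg d Y (n + 1) ω = ∑ m ∈ Finset.range (n + 1),
      (#(sphereW d (m + 1)) : ℝ)⁻¹ * ∑ v ∈ sphereW d (m + 1), Y v ω := by
  induction n with
  | zero =>
    rw [sphAvg_eq_inv_card_mul, Finset.sum_range_one]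
    congr 1
    refine Finset.sum_congr rfl ?_
    rintro ⟨i, l⟩ hv
    obtain rfl : l = [] := by simpa [mem_sphereW, vdepth] using hv
    simp [heightAt]
  | succ n ih => rw [sphAvg_succ Y ω hd n.succ_pos, ih, ← Finset.sum_range_succ]

theorem sphAvg_eq_update_add (hd : d ≠ 0) (v : Vertex d) {r : ℕ} (hr : vdepth v ≤ r) :
    sphAvg d Y r ω = sphAvg d (Function.update Y v 0) r ω +
      Y v ω * (#(sphereW d (vdepth v)) : ℝ)⁻¹ := by
  obtain ⟨n, rfl⟩ := Nat.exists_eq_add_of_le' (le_trans (Nat.le_add_left 1 _) hr)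
  have hsum (m : ℕ) : ∑ w ∈ sphereW d (m + 1), Y w ω =
      ∑ w ∈ sphereW d (m + 1), Function.update Y v 0 w ω +
        if v.2.length = m then Y v ω else 0 := by
    have hY (w : Vertex d) : Y w ω = Function.update Y v 0 w ω + if w = v then Y v ω else 0 := by
      by_cases hw : w = v <;> simp [hw]
    simp only [Finset.sum_congr rfl fun w _ => hY w, Finset.sum_add_distrib, Finset.sum_ite_eq',
      mem_sphereW (Nat.le_add_left 1 m), vdepth, Nat.add_right_cancel_iff]
  have hmem : v.2.length ∈ Finset.range (n + 1) := Finset.mem_range.2 hr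
  simp only [sphAvg_succ_eq_sum _ _ hd, hsum, mul_add, Finset.sum_add_distrib, mul_ite, mul_zero,
    Finset.sum_ite_eq, hmem, if_true, vdepth, mul_comm (Y v ω)]

theorem measurable_sphAvg [MeasurableSpace Ω] {Y : Vertex d → Ω → ℝ}
    (hY : ∀ v, Measurable (Y v)) (r : ℕ) : Measurable (sphAvg d Y r) := by
  unfold sphAvg heightAt
  fun_prop

end Tree

section Probability

variable {Ω : Type*} {mΩ : MeasurableSpace Ω} {P : Measure Ω}

theorem indepFun_compl {ι : Type*} {β : ι → Type*} {mβ : ∀ i, MeasurableSpace (β i)}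
    {X : ∀ i, Ω → β i} (hX : iIndepFun X P) (hmeas : ∀ i, Measurable (X i)) (i : ι) :
    IndepFun (X i) (fun ω (j : ({i}ᶜ : Set ι)) => X j ω) P := by
  have h := indep_biSup_compl (fun j => (hmeas j).comap_le) hX.iIndep {i}
  rw [IndepFun_iff_Indep]
  simpa only [MeasurableSpace.pi, MeasurableSpace.comap_iSup, MeasurableSpace.comap_comp,
    _root_.iSup_singleton, Function.comp_def, iSup_subtype] using h

theorem ae_map_mul_singleton_add_ne_zero {X : Ω → ℤ} (hX : Measurable X)
    (hpos : ∀ j, P {ω | X ω = j} ≠ 0) (a : ℝ) (k : ℤ) :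
    ∀ᵐ s ∂P.map (fun ω => X ω * a), P.map (fun ω => X ω * a) {k * a + s} ≠ 0 := by
  have hXa : Measurable fun ω => (X ω : ℝ) * a := by fun_prop
  have hrange : (Set.range fun ω => (X ω : ℝ) * a).Countable :=
    (Set.countable_range fun j : ℤ => (j : ℝ) * a).mono (by rintro _ ⟨ω, rfl⟩; exact ⟨X ω, rfl⟩)
  filter_upwards [ae_map_mem_range _ hrange.measurableSet P]
  rintro _ ⟨ω, rfl⟩
  rw [Measure.map_apply hXa (measurableSet_singleton _)]
  refine fun h0 => hpos (k + X ω) (measure_mono_null (fun ω' (hω' : X ω' = k + X ω) => ?_) h0)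
  simp [hω', add_mul]

theorem nonempty_support_of_map_eq_withDensity {E : Type*} [MeasurableSpace E] [NeZero P]
    {X : Ω → E} (hX : AEMeasurable X P) {μ : Measure E} {f : E → ℝ≥0∞}
    (hfdens : P.map X = μ.withDensity f) : (Function.support f).Nonempty := by
  rw [Function.support_nonempty_iff]
  rintro rfl
  rw [withDensity_zero, Measure.map_eq_zero_iff hX] at hfdens
  exact NeZero.ne P hfdens

variable {d : ℕ} {Y : Vertex d → Ω → ℤ} {H : Ω → ℝ}

theorem exists_indepFun_ae_eq_add (hd : d ≠ 0) (hmeas : ∀ v, Measurable (Y v))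
    (hindep : iIndepFun Y P)
    (hH : ∀ᵐ ω ∂P, Tendsto (fun r => sphAvg d (fun v ω => (Y v ω : ℝ)) r ω) atTop (𝓝 (H ω)))
    (v : Vertex d) :
    ∃ Z : Ω → ℝ, Measurable Z ∧ IndepFun (Y v) Z P ∧
      H =ᵐ[P] fun ω => Y v ω * (#(sphereW d (vdepth v)) : ℝ)⁻¹ + Z ω := by
  set a : ℝ := (#(sphereW d (vdepth v)) : ℝ)⁻¹
  let T : Vertex d → (({v}ᶜ : Set (Vertex d)) → ℤ) → ℝ := fun w y =>
    if hw : w = v then 0 else y ⟨w, hw⟩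
  have hT_update (ω : Ω) (w : Vertex d) :
      Function.update (fun v ω => (Y v ω : ℝ)) v 0 w ω = T w fun u => Y u ω := by
    by_cases hw : w = v <;> simp [T, hw]
  have hT (w : Vertex d) : Measurable (T w) := by
    by_cases hw : w = v
    · simp only [T, hw, dite_true, measurable_const]
    · simp only [T, hw, dite_false]
      fun_prop
  let ψ : (({v}ᶜ : Set (Vertex d)) → ℤ) → ℝ := fun y => limsup (fun r => sphAvg d T r y) atTop
  have hψ : Measurable ψ := Measurable.limsup fun r => measurable_sphAvg hT r
  refine ⟨fun ω => ψ fun u => Y u ω, by fun_prop,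
    (indepFun_compl hindep hmeas v).comp measurable_id hψ, ?_⟩
  filter_upwards [hH] with ω hω
  have hlim : Tendsto (fun r => sphAvg d T r fun u => Y u ω) atTop (𝓝 (H ω - Y v ω * a)) := by
    refine (hω.sub_const (Y v ω * a)).congr' ?_
    filter_upwards [eventually_ge_atTop (vdepth v)] with r hr
    rw [sphAvg_eq_update_add _ _ hd v hr, add_sub_cancel_right]
    simp only [sphAvg, heightAt, hT_update]
  simp only [ψ, hlim.limsup_eq, add_sub_cancel]

theorem exists_map_eq_conv (hd : d ≠ 0) (hmeas : ∀ v, Measurable (Y v)) (hindep : iIndepFun Y P)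
    (hH : ∀ᵐ ω ∂P, Tendsto (fun r => sphAvg d (fun v ω => (Y v ω : ℝ)) r ω) atTop (𝓝 (H ω)))
    (v : Vertex d) :
    ∃ ν : Measure ℝ, IsProbabilityMeasure ν ∧
      P.map H = P.map (fun ω => Y v ω * (#(sphereW d (vdepth v)) : ℝ)⁻¹) ∗ ν := by
  have := hindep.isProbabilityMeasure
  obtain ⟨Z, hZ, hYZ, hHZ⟩ := exists_indepFun_ae_eq_add hd hmeas hindep hH v
  set a : ℝ := (#(sphereW d (vdepth v)) : ℝ)⁻¹
  have haZ : IndepFun (fun ω => Y v ω * a) Z P :=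
    hYZ.comp (φ := fun k : ℤ => k * a) (by fun_prop) measurable_id
  refine ⟨P.map Z, Measure.isProbabilityMeasure_map hZ.aemeasurable, ?_⟩
  rw [Measure.map_congr hHZ]
  exact haZ.map_add_eq_map_conv_map (by fun_prop) hZ

theorem inv_card_sphereW_mem_stabilizer (hd : d ≠ 0) (hmeas : ∀ v, Measurable (Y v))
    (hindep : iIndepFun Y P) (hpos : ∀ v j, P {ω | Y v ω = j} ≠ 0)
    (hH : ∀ᵐ ω ∂P, Tendsto (fun r => sphAvg d (fun v ω => (Y v ω : ℝ)) r ω) atTop (𝓝 (H ω)))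
    {f : ℝ → ℝ≥0∞} (hf : Continuous f) {C : ℝ≥0∞} (hC : ∀ x, f x ≤ C) (hC_top : C ≠ ∞)
    (hfdens : P.map H = volume.withDensity f) {r : ℕ} (hr : 1 ≤ r) :
    (#(sphereW d r) : ℝ)⁻¹ ∈ AddAction.stabilizer ℝ (Function.support f) := by
  have := hindep.isProbabilityMeasure
  obtain ⟨v, rfl⟩ := exists_vdepth_eq hd hr
  obtain ⟨ν, _, hν⟩ := exists_map_eq_conv hd hmeas hindep hH v
  set a : ℝ := (#(sphereW d (vdepth v)) : ℝ)⁻¹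
  have hYa : Measurable fun ω => (Y v ω : ℝ) * a := by fun_prop
  have := Measure.isProbabilityMeasure_map (μ := P) hYa.aemeasurable
  refine mem_stabilizer_support_of_conv_eq_withDensity (hν.symm.trans hfdens) hf hC hC_top ?_ ?_
  · simpa using ae_map_mul_singleton_add_ne_zero (hmeas v) (hpos v) a 1
  · simpa using ae_map_mul_singleton_add_ne_zero (hmeas v) (hpos v) a (-1)

theorem free_limit_density_full_support_general (hd : 2 ≤ d) (hmeas : ∀ v, Measurable (Y v))
    (hindep : iIndepFun Y P) (hpos : ∀ v j, P {ω | Y v ω = j} ≠ 0)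
    (hH : ∀ᵐ ω ∂P, Tendsto (fun r => sphAvg d (fun v ω => (Y v ω : ℝ)) r ω) atTop (𝓝 (H ω)))
    {f : ℝ → ℝ} (hf : Continuous f) (hbdd : BddAbove (Set.range f))
    (hfdens : P.map H = volume.withDensity fun x => ENNReal.ofReal (f x)) :
    (∀ r₁ : ℕ, 1 ≤ r₁ → ∃ a b : ℝ, a < b ∧
      ∀ x ∈ Set.Ioo a b, ∀ k : ℤ,
        0 < f (x + (k : ℝ) / (((d : ℝ) + 1) * (d : ℝ) ^ (r₁ - 1)))) ∧
    ∀ U : Set ℝ, IsOpen U → U.Nonempty → 0 < P.map H U := by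
  have := hindep.isProbabilityMeasure
  obtain ⟨c, hc⟩ := hbdd
  set g : ℝ → ℝ≥0∞ := fun x => ENNReal.ofReal (f x) with hg_def
  have hg : Continuous g := ENNReal.continuous_ofReal.comp hf
  have hgc (x : ℝ) : g x ≤ ENNReal.ofReal c := ENNReal.ofReal_le_ofReal (hc ⟨x, rfl⟩)
  have hstab (r : ℕ) (hr : 1 ≤ r) := inv_card_sphereW_mem_stabilizer (by lia) hmeas hindep hpos
    hH hg hgc ENNReal.ofReal_ne_top hfdens hr
  have hH_meas : AEMeasurable H P := aemeasurable_of_tendsto_metrizable_ae atTop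
    (fun r => (measurable_sphAvg (by fun_prop) r).aemeasurable) hH
  have hne : (Function.support g).Nonempty := nonempty_support_of_map_eq_withDensity hH_meas hfdens
  constructor
  · intro r hr
    obtain ⟨x₀, hx₀⟩ := hne
    obtain ⟨a, b, hab, hsub⟩ := mem_nhds_iff_exists_Ioo_subset.1 (hg.isOpen_support.mem_nhds hx₀)
    refine ⟨a, b, hab.1.trans hab.2, fun x hx k => ?_⟩
    have hk := (AddAction.mem_stabilizer_set.1 (zsmul_mem (hstab r hr) k) x).2 (hsub hx)
    simpa [hg_def, card_sphereW, div_eq_mul_inv, add_comm] using hk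
  · have hdense : Dense (Function.support g) :=
      dense_of_dense_stabilizer hne (dense_of_inv_card_sphereW_mem hd hstab)
    have := isOpenPosMeasure_withDensity (μ := volume) hg hdense
    exact fun U hU hU_ne => hfdens ▸ hU.measure_pos _ hU_ne

end Probability

/-- If moreover `p > 0` everywhere, the Fourier-inversion density `f` of the
a.s. limit `H` is, for every `r₁ ≥ 1`, strictly positive on `I + ℤ/|W_{r₁}|` for some nonempty
open interval `I`; consequently the law of `H` has full topological support. -/
theorem free_limit_density_full_support
    {Ω : Type} [MeasurableSpace Ω] (P : Measure Ω) [IsProbabilityMeasure P]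
    (d : ℕ) (hd : 2 ≤ d)
    (p : ℤ → ℝ) (hp0 : ∀ j, 0 < p j) (hpsum : Summable p) (hp1 : ∑' j, p j = 1)
    (hsymm : ∀ j, p (-j) = p j)
    (hmom : Summable (fun j : ℤ => (j : ℝ) ^ 2 * p j))
    (Y : Vertex d → Ω → ℤ) (hmeas : ∀ v, Measurable (Y v))
    (hindep : iIndepFun Y P)
    (hlaw : ∀ v (j : ℤ), P {ω | Y v ω = j} = ENNReal.ofReal (p j))
    (H : Ω → ℝ) (hHmeas : Measurable H)
    (hH : ∀ᵐ ω ∂P, Tendsto (fun r => sphAvg d (fun v ω => (Y v ω : ℝ)) r ω) atTop (𝓝 (H ω)))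
    (f : ℝ → ℝ)
    (hf : ∀ x : ℝ, (f x : ℂ) =
      (((2 * Real.pi)⁻¹ : ℝ) : ℂ) *
        ∫ t : ℝ, Complex.exp (-(Complex.I * t * x)) *
          ∫ ω, Complex.exp (Complex.I * t * (H ω : ℝ)) ∂P)
    (hfdens : Measure.map H P = volume.withDensity (fun x => ENNReal.ofReal (f x))) :
    (∀ r₁ : ℕ, 1 ≤ r₁ → ∃ a b : ℝ, a < b ∧
      ∀ x ∈ Set.Ioo a b, ∀ k : ℤ,
        0 < f (x + (k : ℝ) / (((d : ℝ) + 1) * (d : ℝ) ^ (r₁ - 1)))) ∧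
    ∀ U : Set ℝ, IsOpen U → U.Nonempty → 0 < Measure.map H P U := by
  obtain ⟨hcont, hbdd⟩ := continuous_and_bddAbove_of_eq_fourierIntegral hf
  exact free_limit_density_full_support_general hd hmeas hindep (by simp [hlaw, hp0]) hH hcont
    hbdd hfdens
end
end

section
/- Let d ≥ 2 and let p be a symmetric probability mass function on ℤ with Σ_{j∈ℤ} j² p(j) < ∞. Fix a child v of the root ρ of the rooted Cayley tree of order d; let T← be the set of vertices whose path from ρ does not pass through v, and T→ the set consisting of v and its descendants (so |W_r ∩ T←| = d^r and |W_r ∩ T→| = d^{r−1} for r ≥ 1). Then the limits ←H := lim_{r→∞} |W_r ∩ T←|^{−1} Σ_{u ∈ W_r ∩ T←} S_u and →H := lim_{r→∞} |W_r ∩ T→|^{−1} Σ_{u ∈ W_r ∩ T→} (S_u − Y_v) exist almost surely and in L², the three random variables ←H, →H, and Y_v are independent, and almost surely H = (d/(d+1)) ←H + (1/(d+1)) →H + (1/(d+1)) Y_v, where H is the almost-sure limit of the spherical averages H_r. -/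
open MeasureTheory ProbabilityTheory Filter Finset Topology

noncomputable section

/-!
Every vertex of a level has the same number of descendants at each later level, so the average
height over a part of a sphere cut out by the first step is the sum over the levels `k` of the mean
increment at level `k`. A mean over a level is a mean of at least `d ^ k` pairwise independent
centered variables, so its `L²` norm decays like `d ^ (-k / 2)`: the norms are summable, and the
series converges almost surely and in `L²`. The limits over the past and the future are thus series
in the increments of disjoint sets of vertices, neither of which contains `v`, whence the
independence.
-/

open scoped BigOperators ENNReal

theorem ae_tendsto_sum_range_tsum_of_tsum_eLpNorm_ne_top {Ω E : Type*} {mΩ : MeasurableSpace Ω}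
    {μ : Measure Ω} [NormedAddCommGroup E] [CompleteSpace E] {q : ℝ≥0∞} (hq : 1 ≤ q)
    {f : ℕ → Ω → E} (hf : ∀ n, AEStronglyMeasurable (f n) μ)
    (hsum : ∑' n, eLpNorm (f n) q μ ≠ ∞) :
    ∀ᵐ ω ∂μ, Tendsto (fun n => ∑ k ∈ range n, f k ω) atTop (𝓝 (∑' k, f k ω)) := by
  filter_upwards [summable_norm_of_tsum_eLpNorm_ne_top hq hf hsum] with ω hω
  exact hω.of_norm.hasSum.tendsto_sum_nat

theorem tendsto_eLpNorm_sum_range_sub_tsum {Ω E : Type*} {mΩ : MeasurableSpace Ω}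
    {μ : Measure Ω} [NormedAddCommGroup E] [CompleteSpace E] {q : ℝ≥0∞} (hq : 1 ≤ q)
    {f : ℕ → Ω → E} (hf : ∀ n, AEStronglyMeasurable (f n) μ)
    (hsum : ∑' n, eLpNorm (f n) q μ ≠ ∞) :
    Tendsto (fun n => eLpNorm (fun ω => ∑ k ∈ range n, f k ω - ∑' k, f k ω) q μ) atTop (𝓝 0) := by
  refine tendsto_of_tendsto_of_tendsto_of_le_of_le tendsto_const_nhds
    (ENNReal.tendsto_sum_nat_add _ hsum) (fun _ => zero_le) fun n => ?_
  have htail : ∀ N ≥ n, eLpNorm (fun ω => ∑ k ∈ range n, f k ω - ∑ k ∈ range N, f k ω) q μ ≤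
      ∑' k, eLpNorm (f (k + n)) q μ := fun N hN =>
    calc eLpNorm (fun ω => ∑ k ∈ range n, f k ω - ∑ k ∈ range N, f k ω) q μ
        = eLpNorm (∑ k ∈ range (N - n), f (k + n)) q μ := by
          rw [← eLpNorm_neg]
          congr 1
          ext ω
          simp [← Finset.sum_Ico_eq_sub _ hN, Finset.sum_Ico_eq_sum_range, add_comm]
      _ ≤ ∑ k ∈ range (N - n), eLpNorm (f (k + n)) q μ := eLpNorm_sum_le (fun k _ => hf _) hq
      _ ≤ ∑' k, eLpNorm (f (k + n)) q μ := ENNReal.sum_le_tsum _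
  refine Lp.eLpNorm_le_of_ae_tendsto (eventually_atTop.2 ⟨n, htail⟩)
    (fun N => (Finset.aestronglyMeasurable_fun_sum _ fun k _ => hf k).sub
      (Finset.aestronglyMeasurable_fun_sum _ fun k _ => hf k)) ?_
  filter_upwards [ae_tendsto_sum_range_tsum_of_tsum_eLpNorm_ne_top hq hf hsum] with ω hω
  exact hω.const_sub _

theorem eLpNorm_two_eq_ofReal_sqrt_variance {Ω : Type*} {mΩ : MeasurableSpace Ω} {μ : Measure Ω}
    {X : Ω → ℝ} (hX : MemLp X 2 μ) (hmean : ∫ ω, X ω ∂μ = 0) :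
    eLpNorm X 2 μ = ENNReal.ofReal √(Var[X; μ]) := by
  rw [variance_of_integral_eq_zero hX.aemeasurable hmean, Real.sqrt_eq_rpow,
    hX.eLpNorm_eq_integral_rpow_norm two_ne_zero ENNReal.ofNat_ne_top]
  simp

section CenteredAverages

variable {Ω ι : Type*} {mΩ : MeasurableSpace Ω} {μ : Measure Ω} {X : ι → Ω → ℝ} {V : ℝ}

theorem memLp_expect {q : ℝ≥0∞} (hX : ∀ i, MemLp (X i) q μ) (s : Finset ι) :
    MemLp (fun ω => 𝔼 i ∈ s, X i ω) q μ := by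
  simp_rw [Finset.expect_eq_sum_div_card, div_eq_mul_inv]
  exact (memLp_finsetSum s fun i _ => hX i).mul_const _

theorem variance_expect_le (hX : ∀ i, MemLp (X i) 2 μ) (hvar : ∀ i, Var[X i; μ] ≤ V)
    (hindep : Pairwise fun i j => X i ⟂ᵢ[μ] X j) (s : Finset ι) :
    Var[fun ω => 𝔼 i ∈ s, X i ω; μ] ≤ V / #s := by
  have hsum : Var[fun ω => ∑ i ∈ s, X i ω; μ] = ∑ i ∈ s, Var[X i; μ] := by
    rw [← IndepFun.variance_sum (fun i _ => hX i) fun i _ j _ hij => hindep hij]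
    congr 1
    ext ω
    simp
  calc Var[fun ω => 𝔼 i ∈ s, X i ω; μ]
      = (#s : ℝ)⁻¹ ^ 2 * ∑ i ∈ s, Var[X i; μ] := by
        simp_rw [Finset.expect_eq_sum_div_card, div_eq_inv_mul]
        rw [variance_const_mul, hsum]
    _ ≤ (#s : ℝ)⁻¹ ^ 2 * (#s * V) := by
        gcongr
        simpa using Finset.sum_le_card_nsmul s _ V fun i _ => hvar i
    _ = V / #s := by
        rcases eq_or_ne (#s : ℝ) 0 with h | h
        · simp [h]
        · field_simp

theorem eLpNorm_two_expect_le [IsFiniteMeasure μ] (hX : ∀ i, MemLp (X i) 2 μ)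
    (hmean : ∀ i, ∫ ω, X i ω ∂μ = 0) (hvar : ∀ i, Var[X i; μ] ≤ V)
    (hindep : Pairwise fun i j => X i ⟂ᵢ[μ] X j) (s : Finset ι) :
    eLpNorm (fun ω => 𝔼 i ∈ s, X i ω) 2 μ ≤ ENNReal.ofReal √(V / #s) := by
  have hzero : ∫ ω, 𝔼 i ∈ s, X i ω ∂μ = 0 := by
    simp_rw [Finset.expect_eq_sum_div_card]
    rw [integral_div, integral_finsetSum _ fun i _ => (hX i).integrable one_le_two]
    simp [hmean]
  rw [eLpNorm_two_eq_ofReal_sqrt_variance (memLp_expect hX s) hzero]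
  gcongr
  exact variance_expect_le hX hvar hindep s

theorem tsum_eLpNorm_two_expect_ne_top [IsFiniteMeasure μ] (hX : ∀ i, MemLp (X i) 2 μ)
    (hmean : ∀ i, ∫ ω, X i ω ∂μ = 0) (hvar : ∀ i, Var[X i; μ] ≤ V)
    (hindep : Pairwise fun i j => X i ⟂ᵢ[μ] X j) {s : ℕ → Finset ι}
    (hs : Summable fun k => (√(#(s k) : ℝ))⁻¹) :
    ∑' k, eLpNorm (fun ω => 𝔼 i ∈ s k, X i ω) 2 μ ≠ ∞ := by
  refine ((ENNReal.tsum_le_tsum fun k => ?_).trans_lt (hs.mul_left √V).tsum_ofReal_lt_top).ne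
  rw [← div_eq_mul_inv, ← Real.sqrt_div' _ (Nat.cast_nonneg _)]
  exact eLpNorm_two_expect_le hX hmean hvar hindep (s k)

end CenteredAverages

theorem summable_inv_sqrt_of_pow_le {b : ℝ} (hb : 1 < b) {N : ℕ → ℝ} (hN : ∀ k, b ^ k ≤ N k) :
    Summable fun k => (√(N k))⁻¹ := by
  have hb0 : 0 < b := one_pos.trans hb
  have hsqrt : ∀ k, √b ^ k ≤ √(N k) := fun k => Real.le_sqrt_of_sq_le <| by
    rw [pow_right_comm, Real.sq_sqrt hb0.le]
    exact hN k
  refine (summable_geometric_of_lt_one (inv_nonneg.2 (Real.sqrt_nonneg b))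
    (inv_lt_one_of_one_lt₀ ((Real.lt_sqrt zero_le_one).2 (by simpa using hb)))).of_nonneg_of_le
    (fun k => by positivity) fun k => ?_
  rw [inv_pow]
  exact inv_anti₀ (by positivity) (hsqrt k)

section SigmaAlgebraOn

variable {Ω ι κ : Type*} {mΩ : MeasurableSpace Ω} {μ : Measure Ω}

theorem iIndep_biSup_of_pairwise_disjoint {m : ι → MeasurableSpace Ω} (hle : ∀ i, m i ≤ mΩ)
    (hm : iIndep m μ) {S : κ → Set ι} (hS : Pairwise fun j k => Disjoint (S j) (S k)) :
    iIndep (fun j => ⨆ i ∈ S j, m i) μ := by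
  classical
  have := hm.isProbabilityMeasure
  rw [iIndep_iff]
  intro s
  induction s using Finset.induction_on with
  | empty => simp
  | insert a s ha ih =>
    intro f hf
    have hdisj : Disjoint (S a) (⋃ j ∈ s, S j) := by
      simp only [Set.disjoint_iUnion_right]
      exact fun j hj => hS (ne_of_mem_of_not_mem hj ha).symm
    have hinter : MeasurableSet[⨆ i ∈ ⋃ j ∈ s, S j, m i] (⋂ j ∈ s, f j) := by
      refine Finset.measurableSet_biInter s fun j hj => ?_
      have hsub : ⨆ i ∈ S j, m i ≤ ⨆ i ∈ ⋃ j ∈ s, S j, m i :=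
        biSup_mono fun i hi => Set.mem_biUnion hj hi
      exact hsub _ (hf j (Finset.mem_insert_of_mem hj))
    rw [Finset.set_biInter_insert, Finset.prod_insert ha,
      ← ih fun i hi => hf i (Finset.mem_insert_of_mem hi)]
    exact (Indep_iff _ _ _).1 (indep_iSup_of_disjoint hle hm hdisj) _ _
      (hf a (Finset.mem_insert_self _ _)) hinter

variable {β : ι → Type*} [mβ : ∀ i, MeasurableSpace (β i)] {X : ∀ i, Ω → β i}

/-- The σ-algebra generated by the variables `X i` with `i ∈ S`. -/
abbrev sigmaAlgebraOn (X : ∀ i, Ω → β i) (S : Set ι) : MeasurableSpace Ω :=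
  ⨆ i ∈ S, (mβ i).comap (X i)

theorem measurable_sigmaAlgebraOn {S : Set ι} {i : ι} (hi : i ∈ S) :
    Measurable[sigmaAlgebraOn X S] (X i) :=
  (comap_measurable (X i)).mono (le_iSup₂_of_le i hi le_rfl) le_rfl

theorem iIndepFun_of_measurable_sigmaAlgebraOn {γ : κ → Type*} [∀ j, MeasurableSpace (γ j)]
    {Z : ∀ j, Ω → γ j} (hX : ∀ i, Measurable (X i)) (hindep : iIndepFun X μ) {S : κ → Set ι}
    (hS : Pairwise fun j k => Disjoint (S j) (S k))
    (hZ : ∀ j, Measurable[sigmaAlgebraOn X (S j)] (Z j)) : iIndepFun Z μ :=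
  iIndep_of_iIndep_of_le
    (iIndep_biSup_of_pairwise_disjoint (fun i => (hX i).comap_le) hindep.iIndep hS)
    fun j => (hZ j).comap_le

end SigmaAlgebraOn

theorem measurable_tsum_expect {Ω ι : Type*} {m : MeasurableSpace Ω} {X : ι → Ω → ℝ}
    {s : ℕ → Finset ι} (hX : ∀ k, ∀ i ∈ s k, Measurable (X i)) :
    Measurable fun ω => ∑' k, 𝔼 i ∈ s k, X i ω := by
  simp_rw [Finset.expect_eq_sum_div_card]
  exact Measurable.tsum fun k => (Finset.measurable_fun_sum _ (hX k)).div_const _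

theorem expect_take_ofFn {α M : Type*} [Fintype α] [Nonempty α] [AddCommMonoid M] [Module ℚ≥0 M]
    (F : List α → M) {k n : ℕ} (hkn : k ≤ n) :
    𝔼 l : Fin n → α, F ((List.ofFn l).take k) = 𝔼 l : Fin k → α, F (List.ofFn l) := by
  obtain ⟨j, rfl⟩ := Nat.exists_eq_add_of_le hkn
  calc 𝔼 l : Fin (k + j) → α, F ((List.ofFn l).take k)
      = 𝔼 x : (Fin k → α) × (Fin j → α), F (List.ofFn x.1) :=
        (Fintype.expect_equiv (Fin.appendEquiv k j) _ _ fun x => by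
          simp [Fin.appendEquiv, List.ofFn_fin_append, List.take_left']).symm
    _ = 𝔼 l : Fin k → α, F (List.ofFn l) := by
        rw [← Finset.univ_product_univ, Finset.expect_product]
        simp

section Sectors

variable {d : ℕ} (A : Fin (d + 1) → Prop) [DecidablePred A]

/-- The part of the sphere `W_r` lying above those children of the root that satisfy `A`: for the
child `(a₀, [])`, the past `W_r ∩ T←` is the case `(· ≠ a₀)` and the future `W_r ∩ T→` the case
`(· = a₀)`. -/
def sector (r : ℕ) : Finset (Vertex d) := {v ∈ sphereW d r | A v.1}

theorem sector_succ_eq_image (n : ℕ) :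
    sector A (n + 1) = (({a | A a} : Finset (Fin (d + 1))) ×ˢ
      (univ : Finset (Fin n → Fin d))).image (Prod.map id List.ofFn) := by
  rw [← Finset.filter_product_left, Finset.univ_product_univ, sector, sphereW, Finset.filter_image]
  rfl

theorem prodMap_id_ofFn_injective (n : ℕ) :
    Function.Injective (Prod.map id List.ofFn : Fin (d + 1) × (Fin n → Fin d) → Vertex d) :=
  Function.injective_id.prodMap List.ofFn_injective

theorem card_sector_succ (n : ℕ) : #(sector A (n + 1)) = #{a | A a} * d ^ n := by
  rw [sector_succ_eq_image, Finset.card_image_of_injective _ (prodMap_id_ofFn_injective n)]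
  simp

variable {A} in
theorem length_of_mem_sector_succ {n : ℕ} {v : Vertex d} (hv : v ∈ sector A (n + 1)) :
    v.2.length = n := by
  rw [sector_succ_eq_image] at hv
  obtain ⟨x, -, rfl⟩ := Finset.mem_image.1 hv
  exact List.length_ofFn

theorem expect_sector_succ {M : Type*} [AddCommMonoid M] [Module ℚ≥0 M] (n : ℕ)
    (g : Vertex d → M) :
    𝔼 v ∈ sector A (n + 1), g v = 𝔼 a with A a, 𝔼 l : Fin n → Fin d, g (a, List.ofFn l) := by
  rw [sector_succ_eq_image, Finset.expect_image (prodMap_id_ofFn_injective n).injOn,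
    Finset.expect_product]
  rfl

theorem expect_sector_ancestor [NeZero d] {M : Type*} [AddCommMonoid M] [Module ℚ≥0 M]
    (g : Vertex d → M) {k n : ℕ} (hkn : k ≤ n) :
    𝔼 v ∈ sector A (n + 1), g (v.1, v.2.take k) = 𝔼 v ∈ sector A (k + 1), g v := by
  rw [expect_sector_succ, expect_sector_succ]
  exact Finset.expect_congr rfl fun a _ => expect_take_ofFn (fun l => g (a, l)) hkn

theorem expect_heightAt_sector [NeZero d] {Ω : Type*} (X : Vertex d → Ω → ℝ) (n : ℕ) (ω : Ω) :
    𝔼 v ∈ sector A (n + 1), heightAt X v ω =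
      ∑ k ∈ range (n + 1), 𝔼 v ∈ sector A (k + 1), X v ω :=
  calc 𝔼 v ∈ sector A (n + 1), heightAt X v ω
      = 𝔼 v ∈ sector A (n + 1), ∑ k ∈ range (n + 1), X (v.1, v.2.take k) ω :=
        Finset.expect_congr rfl fun v hv => by rw [heightAt, length_of_mem_sector_succ hv]
    _ = ∑ k ∈ range (n + 1), 𝔼 v ∈ sector A (n + 1), X (v.1, v.2.take k) ω :=
        Finset.expect_sum_comm _ _ _
    _ = ∑ k ∈ range (n + 1), 𝔼 v ∈ sector A (k + 1), X v ω :=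
        Finset.sum_congr rfl fun k hk =>
          expect_sector_ancestor A (X · ω) (Nat.lt_succ_iff.1 (Finset.mem_range.1 hk))

end Sectors

section PastFuture

variable {d : ℕ} {Ω : Type*}

theorem card_sector_ne_succ (a₀ : Fin (d + 1)) (n : ℕ) :
    #(sector (· ≠ a₀) (n + 1)) = d ^ (n + 1) := by
  simp [card_sector_succ, Finset.filter_ne', pow_succ']

theorem card_sector_eq_succ (a₀ : Fin (d + 1)) (n : ℕ) : #(sector (· = a₀) (n + 1)) = d ^ n := by
  simp [card_sector_succ, Finset.filter_eq']

theorem sector_eq_one (a₀ : Fin (d + 1)) : sector (· = a₀) 1 = {(a₀, [])} := by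
  rw [sector_succ_eq_image, Finset.filter_eq']
  simp

/-- The average of the heights over `W_r ∩ T←`. -/
def pastAvg (X : Vertex d → Ω → ℝ) (a₀ : Fin (d + 1)) (r : ℕ) (ω : Ω) : ℝ :=
  ((d : ℝ) ^ r)⁻¹ * ∑ v ∈ sector (· ≠ a₀) r, heightAt X v ω

/-- The average over `W_r ∩ T→` of the heights relative to the root `(a₀, [])` of `T→`. -/
def futureAvg (X : Vertex d → Ω → ℝ) (a₀ : Fin (d + 1)) (r : ℕ) (ω : Ω) : ℝ :=
  ((d : ℝ) ^ (r - 1))⁻¹ * ∑ v ∈ sector (· = a₀) r, (heightAt X v ω - X (a₀, []) ω)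

/-- The limit `←H` of `pastAvg`, as the series of the mean increments over the levels of `T←`. -/
def pastLimit (X : Vertex d → Ω → ℝ) (a₀ : Fin (d + 1)) (ω : Ω) : ℝ :=
  ∑' k, 𝔼 v ∈ sector (· ≠ a₀) (k + 1), X v ω

/-- The limit `→H` of `futureAvg`, as the series of the mean increments over the levels of `T→`
below its root `(a₀, [])`. -/
def futureLimit (X : Vertex d → Ω → ℝ) (a₀ : Fin (d + 1)) (ω : Ω) : ℝ :=
  ∑' k, 𝔼 v ∈ sector (· = a₀) (k + 2), X v ω

theorem pastAvg_succ [NeZero d] (X : Vertex d → Ω → ℝ) (a₀ : Fin (d + 1)) (n : ℕ) (ω : Ω) :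
    pastAvg X a₀ (n + 1) ω = ∑ k ∈ range (n + 1), 𝔼 v ∈ sector (· ≠ a₀) (k + 1), X v ω := by
  rw [← expect_heightAt_sector, Finset.expect_eq_sum_div_card, card_sector_ne_succ, pastAvg,
    Nat.cast_pow, div_eq_inv_mul]

theorem futureAvg_succ [NeZero d] (X : Vertex d → Ω → ℝ) (a₀ : Fin (d + 1)) (n : ℕ) (ω : Ω) :
    futureAvg X a₀ (n + 1) ω = ∑ k ∈ range n, 𝔼 v ∈ sector (· = a₀) (k + 2), X v ω := by
  have hne : (sector (· = a₀) (n + 1)).Nonempty := by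
    simp [← Finset.card_pos, card_sector_eq_succ, Nat.pos_of_neZero]
  calc futureAvg X a₀ (n + 1) ω
      = 𝔼 v ∈ sector (· = a₀) (n + 1), (heightAt X v ω - X (a₀, []) ω) := by
        rw [Finset.expect_eq_sum_div_card, card_sector_eq_succ, futureAvg, Nat.add_sub_cancel,
          Nat.cast_pow, div_eq_inv_mul]
    _ = ∑ k ∈ range (n + 1), 𝔼 v ∈ sector (· = a₀) (k + 1), X v ω - X (a₀, []) ω := by
        rw [Finset.expect_sub_distrib, expect_heightAt_sector, Finset.expect_const hne]
    _ = ∑ k ∈ range n, 𝔼 v ∈ sector (· = a₀) (k + 2), X v ω := by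
        rw [Finset.sum_range_succ', sector_eq_one, Finset.expect_singleton, add_sub_cancel_right]

theorem sphAvg_succ_eq_pastAvg_add_futureAvg [NeZero d] (X : Vertex d → Ω → ℝ) (a₀ : Fin (d + 1))
    (n : ℕ) (ω : Ω) :
    sphAvg d X (n + 1) ω = (d : ℝ) / (d + 1) * pastAvg X a₀ (n + 1) ω +
      1 / ((d : ℝ) + 1) * futureAvg X a₀ (n + 1) ω + 1 / ((d : ℝ) + 1) * X (a₀, []) ω := by
  have hd : (d : ℝ) ≠ 0 := NeZero.ne _
  have hsplit : ∑ v ∈ sphereW d (n + 1), heightAt X v ω =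
      ∑ v ∈ sector (· = a₀) (n + 1), heightAt X v ω +
        ∑ v ∈ sector (· ≠ a₀) (n + 1), heightAt X v ω :=
    (Finset.sum_filter_add_sum_filter_not _ _ _).symm
  rw [sphAvg, pastAvg, futureAvg, hsplit, Finset.sum_sub_distrib, Finset.sum_const,
    card_sector_eq_succ, Nat.add_sub_cancel, nsmul_eq_mul]
  push_cast
  field_simp
  ring

variable {mΩ : MeasurableSpace Ω} {P : Measure Ω} {X : Vertex d → Ω → ℝ} {V : ℝ}

theorem iIndepFun_pastLimit_futureLimit (hX : ∀ v, Measurable (X v)) (hindep : iIndepFun X P)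
    (a₀ : Fin (d + 1)) : iIndepFun ![pastLimit X a₀, futureLimit X a₀, X (a₀, [])] P := by
  let S : Fin 3 → Set (Vertex d) := ![{v | v.1 ≠ a₀}, {v | v.1 = a₀ ∧ v.2 ≠ []}, {(a₀, [])}]
  have hS : Pairwise fun i j => Disjoint (S i) (S j) := by
    intro i j hij
    rw [Set.disjoint_left]
    rintro ⟨a, l⟩
    fin_cases i <;> fin_cases j <;> simp_all [S]
  have hpast : ∀ k, ∀ v ∈ sector (· ≠ a₀) (k + 1), v ∈ S 0 := fun _ _ hv =>
    (Finset.mem_filter.1 hv).2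
  have hfuture : ∀ k, ∀ v ∈ sector (· = a₀) (k + 2), v ∈ S 1 := fun _ _ hv =>
    ⟨(Finset.mem_filter.1 hv).2,
      List.ne_nil_of_length_eq_add_one (length_of_mem_sector_succ hv)⟩
  refine iIndepFun_of_measurable_sigmaAlgebraOn hX hindep hS fun j => ?_
  fin_cases j
  · exact measurable_tsum_expect fun k v hv => measurable_sigmaAlgebraOn (hpast k v hv)
  · exact measurable_tsum_expect fun k v hv => measurable_sigmaAlgebraOn (hfuture k v hv)
  · exact measurable_sigmaAlgebraOn (S := S 2) rfl

section Convergence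

variable [IsFiniteMeasure P] (hd : 2 ≤ d) (hX : ∀ v, MemLp (X v) 2 P)
  (hmean : ∀ v, ∫ ω, X v ω ∂P = 0) (hvar : ∀ v, Var[X v; P] ≤ V)
  (hindep : Pairwise fun u v => X u ⟂ᵢ[P] X v) (a₀ : Fin (d + 1))

include hd hX hmean hvar hindep

theorem tsum_eLpNorm_two_expect_sector_ne_top (A : Fin (d + 1) → Prop) [DecidablePred A] {j : ℕ}
    (hcard : ∀ k, d ^ k ≤ #(sector A (k + j))) :
    ∑' k, eLpNorm (fun ω => 𝔼 v ∈ sector A (k + j), X v ω) 2 P ≠ ∞ :=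
  tsum_eLpNorm_two_expect_ne_top hX hmean hvar hindep <|
    summable_inv_sqrt_of_pow_le (b := d) (by exact_mod_cast hd) fun k => by
      exact_mod_cast hcard k

theorem tsum_eLpNorm_two_expect_past_ne_top :
    ∑' k, eLpNorm (fun ω => 𝔼 v ∈ sector (· ≠ a₀) (k + 1), X v ω) 2 P ≠ ∞ :=
  tsum_eLpNorm_two_expect_sector_ne_top hd hX hmean hvar hindep _ fun k =>
    (Nat.pow_le_pow_right (by omega) k.le_succ).trans_eq (card_sector_ne_succ a₀ k).symm

theorem tsum_eLpNorm_two_expect_future_ne_top :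
    ∑' k, eLpNorm (fun ω => 𝔼 v ∈ sector (· = a₀) (k + 2), X v ω) 2 P ≠ ∞ :=
  tsum_eLpNorm_two_expect_sector_ne_top hd hX hmean hvar hindep _ fun k =>
    (Nat.pow_le_pow_right (by omega) k.le_succ).trans_eq (card_sector_eq_succ a₀ (k + 1)).symm

theorem ae_tendsto_pastAvg :
    ∀ᵐ ω ∂P, Tendsto (fun r => pastAvg X a₀ r ω) atTop (𝓝 (pastLimit X a₀ ω)) := by
  have : NeZero d := ⟨by omega⟩
  filter_upwards [ae_tendsto_sum_range_tsum_of_tsum_eLpNorm_ne_top one_le_two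
    (fun _ => (memLp_expect hX _).aestronglyMeasurable)
    (tsum_eLpNorm_two_expect_past_ne_top hd hX hmean hvar hindep a₀)] with ω hω
  rw [← tendsto_add_atTop_iff_nat 1]
  simpa only [pastAvg_succ, pastLimit] using (tendsto_add_atTop_iff_nat 1).2 hω

theorem tendsto_eLpNorm_pastAvg_sub_pastLimit :
    Tendsto (fun r => eLpNorm (fun ω => pastAvg X a₀ r ω - pastLimit X a₀ ω) 2 P) atTop (𝓝 0) := by
  have : NeZero d := ⟨by omega⟩
  rw [← tendsto_add_atTop_iff_nat 1]
  simpa only [pastAvg_succ, pastLimit] using (tendsto_add_atTop_iff_nat 1).2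
    (tendsto_eLpNorm_sum_range_sub_tsum one_le_two
      (fun _ => (memLp_expect hX _).aestronglyMeasurable)
      (tsum_eLpNorm_two_expect_past_ne_top hd hX hmean hvar hindep a₀))

theorem ae_tendsto_futureAvg :
    ∀ᵐ ω ∂P, Tendsto (fun r => futureAvg X a₀ r ω) atTop (𝓝 (futureLimit X a₀ ω)) := by
  have : NeZero d := ⟨by omega⟩
  filter_upwards [ae_tendsto_sum_range_tsum_of_tsum_eLpNorm_ne_top one_le_two
    (fun _ => (memLp_expect hX _).aestronglyMeasurable)
    (tsum_eLpNorm_two_expect_future_ne_top hd hX hmean hvar hindep a₀)] with ω hω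
  rw [← tendsto_add_atTop_iff_nat 1]
  simpa only [futureAvg_succ, futureLimit] using hω

theorem tendsto_eLpNorm_futureAvg_sub_futureLimit :
    Tendsto (fun r => eLpNorm (fun ω => futureAvg X a₀ r ω - futureLimit X a₀ ω) 2 P) atTop
      (𝓝 0) := by
  have : NeZero d := ⟨by omega⟩
  rw [← tendsto_add_atTop_iff_nat 1]
  simpa only [futureAvg_succ, futureLimit] using tendsto_eLpNorm_sum_range_sub_tsum one_le_two
    (fun _ => (memLp_expect hX _).aestronglyMeasurable)
    (tsum_eLpNorm_two_expect_future_ne_top hd hX hmean hvar hindep a₀)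

end Convergence

theorem eq_pastFuture_combination_of_tendsto_sphAvg [NeZero d] {a₀ : Fin (d + 1)} {ω : Ω}
    {h hL hR : ℝ} (hs : Tendsto (fun r => sphAvg d X r ω) atTop (𝓝 h))
    (hpast : Tendsto (fun r => pastAvg X a₀ r ω) atTop (𝓝 hL))
    (hfuture : Tendsto (fun r => futureAvg X a₀ r ω) atTop (𝓝 hR)) :
    h = (d : ℝ) / (d + 1) * hL + 1 / ((d : ℝ) + 1) * hR + 1 / ((d : ℝ) + 1) * X (a₀, []) ω := by
  refine tendsto_nhds_unique ((tendsto_add_atTop_iff_nat 1).2 hs) ?_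
  simp_rw [sphAvg_succ_eq_pastAvg_add_futureAvg X a₀]
  exact ((((tendsto_add_atTop_iff_nat 1).2 hpast).const_mul _).add
    (((tendsto_add_atTop_iff_nat 1).2 hfuture).const_mul _)).add_const _

end PastFuture

section IntegerLaw

variable {Ω : Type*} {mΩ : MeasurableSpace Ω} {P : Measure Ω}

theorem memLp_two_intCast_of_summable {p : ℤ → ℝ} (hmom : Summable fun j : ℤ => (j : ℝ) ^ 2 * p j)
    {X : Ω → ℤ} (hX : Measurable X) (hlaw : ∀ j, P {ω | X ω = j} = ENNReal.ofReal (p j)) :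
    MemLp (fun ω => (X ω : ℝ)) 2 P := by
  have hcast : Measurable fun ω => (X ω : ℝ) := measurable_from_top.comp hX
  rw [memLp_two_iff_integrable_sq hcast.aestronglyMeasurable]
  refine ⟨(hcast.pow_const 2).aestronglyMeasurable, ?_⟩
  calc ∫⁻ ω, ‖(X ω : ℝ) ^ 2‖ₑ ∂P
      = ∑' j : ℤ, ‖(j : ℝ) ^ 2‖ₑ * P.map X {j} := by
        rw [← lintegral_map (f := fun j : ℤ => ‖(j : ℝ) ^ 2‖ₑ) measurable_from_top hX,
          lintegral_countable']
    _ = ∑' j : ℤ, ENNReal.ofReal ((j : ℝ) ^ 2 * p j) := tsum_congr fun j => by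
        rw [Measure.map_apply hX (measurableSet_singleton j), ENNReal.ofReal_mul (sq_nonneg _),
          ← hlaw j, Real.enorm_eq_ofReal (sq_nonneg _)]
        rfl
    _ < ∞ := hmom.tsum_ofReal_lt_top

theorem identDistrib_of_measure_eq {α : Type*} [MeasurableSpace α] [Countable α]
    [MeasurableSingletonClass α] {X X' : Ω → α} (hX : Measurable X) (hX' : Measurable X')
    (h : ∀ a, P {ω | X ω = a} = P {ω | X' ω = a}) : IdentDistrib X X' P P := by
  refine ⟨hX.aemeasurable, hX'.aemeasurable, Measure.ext_of_singleton fun a => ?_⟩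
  rw [Measure.map_apply hX (measurableSet_singleton a),
    Measure.map_apply hX' (measurableSet_singleton a)]
  exact h a

theorem integral_eq_zero_of_identDistrib_neg {X : Ω → ℝ} (h : IdentDistrib X (-X) P P) :
    ∫ ω, X ω ∂P = 0 :=
  self_eq_neg.1 (h.integral_eq.trans (integral_neg _))

theorem integral_intCast_eq_zero_of_symm {X : Ω → ℤ} (hX : Measurable X)
    (h : ∀ j, P {ω | X ω = -j} = P {ω | X ω = j}) : ∫ ω, (X ω : ℝ) ∂P = 0 := by
  have hneg : IdentDistrib X (-X) P P := identDistrib_of_measure_eq hX hX.neg fun j => by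
    simp_rw [← h j, Pi.neg_apply, neg_eq_iff_eq_neg]
  refine integral_eq_zero_of_identDistrib_neg ?_
  simpa [Function.comp_def, Pi.neg_def] using
    hneg.comp (u := fun j : ℤ => (j : ℝ)) measurable_from_top

end IntegerLaw

theorem free_limit_past_future_decomposition_general {Ω : Type*} [MeasurableSpace Ω]
    {P : Measure Ω} {d : ℕ} (hd : 2 ≤ d) {X : Vertex d → Ω → ℝ} {V : ℝ}
    (hmeas : ∀ v, Measurable (X v)) (hindep : iIndepFun X P) (hX : ∀ v, MemLp (X v) 2 P)
    (hmean : ∀ v, ∫ ω, X v ω ∂P = 0) (hvar : ∀ v, Var[X v; P] ≤ V) {H : Ω → ℝ}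
    (hH : ∀ᵐ ω ∂P, Tendsto (fun r => sphAvg d X r ω) atTop (𝓝 (H ω))) (a₀ : Fin (d + 1)) :
    ∃ HL HR : Ω → ℝ,
      (∀ᵐ ω ∂P, Tendsto (fun r => pastAvg X a₀ r ω) atTop (𝓝 (HL ω))) ∧
      Tendsto (fun r => eLpNorm (fun ω => pastAvg X a₀ r ω - HL ω) 2 P) atTop (𝓝 0) ∧
      (∀ᵐ ω ∂P, Tendsto (fun r => futureAvg X a₀ r ω) atTop (𝓝 (HR ω))) ∧
      Tendsto (fun r => eLpNorm (fun ω => futureAvg X a₀ r ω - HR ω) 2 P) atTop (𝓝 0) ∧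
      iIndepFun ![HL, HR, X (a₀, [])] P ∧
      (∀ᵐ ω ∂P, H ω = (d : ℝ) / ((d : ℝ) + 1) * HL ω + 1 / ((d : ℝ) + 1) * HR ω
        + 1 / ((d : ℝ) + 1) * X (a₀, []) ω) := by
  have := hindep.isProbabilityMeasure
  have : NeZero d := ⟨by omega⟩
  have hpair : Pairwise fun u v => X u ⟂ᵢ[P] X v := fun _ _ huv => hindep.indepFun huv
  have hpast := ae_tendsto_pastAvg hd hX hmean hvar hpair a₀
  have hfuture := ae_tendsto_futureAvg hd hX hmean hvar hpair a₀
  refine ⟨pastLimit X a₀, futureLimit X a₀,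
    hpast, tendsto_eLpNorm_pastAvg_sub_pastLimit hd hX hmean hvar hpair a₀,
    hfuture, tendsto_eLpNorm_futureAvg_sub_futureLimit hd hX hmean hvar hpair a₀,
    iIndepFun_pastLimit_futureLimit hmeas hindep a₀, ?_⟩
  filter_upwards [hH, hpast, hfuture] with ω hω hpastω hfutureω
  exact eq_pastFuture_combination_of_tendsto_sphAvg hω hpastω hfutureω

/-- Past/future decomposition of the limit `H` at a child `v₀ = (a₀, [])`
of the root: the backward and forward spherical averages converge a.s. and in `L²` to `←H`
and `→H`, the triple `(←H, →H, Y_{v₀})` is independent, and a.s.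
`H = (d/(d+1))·←H + (1/(d+1))·→H + (1/(d+1))·Y_{v₀}`. -/
theorem free_limit_past_future_decomposition
    {Ω : Type} [MeasurableSpace Ω] (P : Measure Ω) [IsProbabilityMeasure P]
    (d : ℕ) (hd : 2 ≤ d)
    (p : ℤ → ℝ) (hp0 : ∀ j, 0 ≤ p j) (hpsum : Summable p) (hp1 : ∑' j, p j = 1)
    (hsymm : ∀ j, p (-j) = p j)
    (hmom : Summable (fun j : ℤ => (j : ℝ) ^ 2 * p j))
    (Y : Vertex d → Ω → ℤ) (hmeas : ∀ v, Measurable (Y v))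
    (hindep : iIndepFun Y P)
    (hlaw : ∀ v (j : ℤ), P {ω | Y v ω = j} = ENNReal.ofReal (p j))
    (H : Ω → ℝ) (hHmeas : Measurable H)
    (hH : ∀ᵐ ω ∂P, Tendsto (fun r => sphAvg d (fun v ω => (Y v ω : ℝ)) r ω) atTop (𝓝 (H ω)))
    (a₀ : Fin (d + 1)) :
    ∃ HL HR : Ω → ℝ,
      (∀ᵐ ω ∂P, Tendsto (fun r : ℕ =>
          ((d : ℝ) ^ r)⁻¹ * ∑ v ∈ (sphereW d r).filter (fun v => v.1 ≠ a₀),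
            heightAt (fun v ω => (Y v ω : ℝ)) v ω)
        atTop (𝓝 (HL ω))) ∧
      Tendsto (fun r : ℕ => eLpNorm (fun ω =>
          ((d : ℝ) ^ r)⁻¹ * ∑ v ∈ (sphereW d r).filter (fun v => v.1 ≠ a₀),
            heightAt (fun v ω => (Y v ω : ℝ)) v ω - HL ω) 2 P) atTop (𝓝 0) ∧
      (∀ᵐ ω ∂P, Tendsto (fun r : ℕ =>
          ((d : ℝ) ^ (r - 1))⁻¹ * ∑ v ∈ (sphereW d r).filter (fun v => v.1 = a₀),
            (heightAt (fun v ω => (Y v ω : ℝ)) v ω - (Y (a₀, []) ω : ℝ)))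
        atTop (𝓝 (HR ω))) ∧
      Tendsto (fun r : ℕ => eLpNorm (fun ω =>
          ((d : ℝ) ^ (r - 1))⁻¹ * ∑ v ∈ (sphereW d r).filter (fun v => v.1 = a₀),
            (heightAt (fun v ω => (Y v ω : ℝ)) v ω - (Y (a₀, []) ω : ℝ)) - HR ω) 2 P)
        atTop (𝓝 0) ∧
      iIndepFun
        ![HL, HR, fun ω => ((Y (a₀, []) ω : ℤ) : ℝ)] P ∧
      (∀ᵐ ω ∂P, H ω =
        (d : ℝ) / ((d : ℝ) + 1) * HL ω + 1 / ((d : ℝ) + 1) * HR ω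
          + 1 / ((d : ℝ) + 1) * (Y (a₀, []) ω : ℝ)) := by
  have hX v := memLp_two_intCast_of_summable hmom (hmeas v) (hlaw v)
  have hmean v : ∫ ω, (Y v ω : ℝ) ∂P = 0 :=
    integral_intCast_eq_zero_of_symm (hmeas v) fun j => by rw [hlaw, hlaw, hsymm]
  have hid v : IdentDistrib (Y v) (Y (a₀, [])) P P :=
    identDistrib_of_measure_eq (hmeas v) (hmeas (a₀, [])) fun j => by rw [hlaw, hlaw]
  have hcast : Measurable fun j : ℤ => (j : ℝ) := measurable_from_top
  exact free_limit_past_future_decomposition_general hd (fun v => hcast.comp (hmeas v))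
    (hindep.comp _ fun _ => hcast) hX hmean (fun v => ((hid v).comp hcast).variance_eq.le) hH a₀
end
end

section
/- Let d ≥ 2 and let (Y_v), indexed by the non-root vertices of the rooted Cayley tree of order d, be independent real-valued random variables with E[Y_v] = 0 and E[Y_v²] ≤ C < ∞ for all v. Suppose there is a function ψ⋆ : ℝ → [0, 1] with |E[exp(i s Y_v)]| ≤ ψ⋆(s) for every v and every s ∈ ℝ, and constants c̄ > 0 and δ > 0 with ψ⋆(s) ≤ exp(−c̄ s²) for all |s| ≤ δ. Then the almost-sure limit H of the spherical averages H_r exists, and with c := min( c̄/((d+1)(d−1)), c̄δ/(d(d−1)) ) > 0 one has |E[exp(itH)]| ≤ exp( −c · min(t², |t|) ) for all t ∈ ℝ; consequently the law of H is absolutely continuous with respect to Lebesgue measure and admits a bounded, infinitely differentiable density. -/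
open MeasureTheory ProbabilityTheory Filter Finset Topology

noncomputable section

/-!
Averaging the heights over `W_r` gives `H_r = M_1 + ⋯ + M_r`, where `M_k` is the mean of the
increments over `W_k`. The second moment of `M_k` is at most `C / |W_k|`, and `|W_k|` grows
geometrically, so the series converges almost surely. In the characteristic function of its sum `H`
all factors have modulus at most `1`, and one keeps only those of the vertices of a single sphere
`W_k`: as long as `|t| ≤ δ |W_k|` they bound it by `exp (-c̄ (t / |W_k|)²) ^ |W_k| =
exp (-c̄ t² / |W_k|)`. The smallest such sphere has `|W_k| = d + 1` or `δ |W_k| ≤ d |t|`, which is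
quadratic decay for small `t` and exponential decay for large `t`; Fourier inversion then yields
the smooth density.
-/

section Decay

variable {E : Type*} [NormedAddCommGroup E] [NormedSpace ℝ E] [FiniteDimensional ℝ E]
  [Nontrivial E] [MeasurableSpace E] [BorelSpace E] {μ : Measure E} [μ.IsAddHaarMeasure]

theorem integrable_norm_pow_mul_exp_neg_mul_norm (n : ℕ) {c : ℝ} (hc : 0 < c) :
    Integrable (fun t : E => ‖t‖ ^ n * Real.exp (-c * ‖t‖)) μ := by
  have hradial (m : ℕ) : IntegrableOn (fun r : ℝ => r ^ m * Real.exp (-c * r)) (Set.Ioi 0) := by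
    simpa using integrableOn_rpow_mul_exp_neg_mul_rpow (p := 1) (s := m)
      (neg_one_lt_zero.trans_le m.cast_nonneg) one_pos hc
  refine (integrable_fun_norm_addHaar μ (f := fun r => r ^ n * Real.exp (-c * r))).2 ?_
  simpa only [smul_eq_mul, ← mul_assoc, ← pow_add] using hradial (Module.finrank ℝ E - 1 + n)

theorem integrable_norm_pow_mul_norm_of_norm_le_exp {F : Type*} [NormedAddCommGroup F] {φ : E → F}
    (hφ : AEStronglyMeasurable φ μ) {c : ℝ} (hc : 0 < c)
    (h : ∀ t, ‖φ t‖ ≤ Real.exp (-c * min (‖t‖ ^ 2) ‖t‖)) (n : ℕ) :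
    Integrable (fun t => ‖t‖ ^ n * ‖φ t‖) μ := by
  refine ((integrable_norm_pow_mul_exp_neg_mul_norm n hc).const_mul (Real.exp c)).mono'
    ((continuous_norm.pow n).aestronglyMeasurable.mul hφ.norm) (ae_of_all _ fun t => ?_)
  have hmin : ‖t‖ - 1 ≤ min (‖t‖ ^ 2) ‖t‖ :=
    le_min (by nlinarith [sq_nonneg (‖t‖ - 1)]) (by linarith)
  rw [Real.norm_of_nonneg (by positivity), mul_left_comm, ← Real.exp_add]
  gcongr
  exact (h t).trans (Real.exp_le_exp.2 (by nlinarith))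

end Decay

section Density

open scoped ContDiff FourierTransform

variable {E : Type*} [NormedAddCommGroup E] [MeasurableSpace E] [BorelSpace E]

theorem measure_ext_of_integral_contDiff_eq [NormedSpace ℝ E] [FiniteDimensional ℝ E]
    {μ ν : Measure E} [IsLocallyFiniteMeasure μ] [IsLocallyFiniteMeasure ν]
    (h : ∀ g : E → ℝ, ContDiff ℝ ∞ g → HasCompactSupport g → ∫ x, g x ∂μ = ∫ x, g x ∂ν) :
    μ = ν := by
  have : ProperSpace E := FiniteDimensional.proper ℝ E
  refine Measure.ext_of_integral_eq_on_compactlySupported fun f => ?_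
  choose g hg hgf hsupp using fun n : ℕ =>
    f.continuous.exists_contDiff_approx ⊤ continuous_const fun _ => Nat.one_div_pos_of_nat (n := n)
  have hgc (n : ℕ) : HasCompactSupport (g n) := f.hasCompactSupport.mono (hsupp n)
  have hlim (x : E) : Tendsto (fun n => g n x) atTop (𝓝 (f x)) :=
    tendsto_iff_dist_tendsto_zero.2 <| squeeze_zero (fun _ => dist_nonneg)
      (fun n => (hgf n x).le) tendsto_one_div_add_atTop_nhds_zero_nat
  have hbound (n : ℕ) (x : E) : ‖g n x‖ ≤ (tsupport f).indicator (fun x => 1 + ‖f x‖) x := by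
    by_cases hx : x ∈ tsupport f
    · have hn : (1 : ℝ) / (n + 1) ≤ 1 := by
        simpa using one_div_le_one_div_of_le one_pos (by simp : (1 : ℝ) ≤ n + 1)
      rw [Set.indicator_of_mem hx, ← sub_le_iff_le_add]
      exact (norm_sub_norm_le _ _).trans ((dist_eq_norm (g n x) (f x) ▸ (hgf n x).le).trans hn)
    · rw [Set.indicator_of_notMem hx, Function.notMem_support.1
        fun h => hx (subset_tsupport f (hsupp n h)), norm_zero]
  have hint (m : Measure E) [IsLocallyFiniteMeasure m] :
      Tendsto (fun n => ∫ x, g n x ∂m) atTop (𝓝 (∫ x, f x ∂m)) :=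
    tendsto_integral_of_dominated_convergence _ (fun n => (hg n).continuous.aestronglyMeasurable)
      ((integrable_indicator_iff (isClosed_tsupport f).measurableSet).2
        ((continuous_const.add f.continuous.norm).continuousOn.integrableOn_compact
          f.hasCompactSupport))
      (fun n => ae_of_all _ (hbound n)) (ae_of_all _ hlim)
  refine tendsto_nhds_unique (hint μ) ?_
  simp only [h _ (hg _) (hgc _)]
  exact hint ν

theorem isLocallyFiniteMeasure_add {X : Type*} [TopologicalSpace X] [MeasurableSpace X]
    {μ ν : Measure X} [IsLocallyFiniteMeasure μ] [IsLocallyFiniteMeasure ν] :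
    IsLocallyFiniteMeasure (μ + ν) where
  finiteAtNhds x := by
    obtain ⟨s, hs, hμs⟩ := μ.finiteAt_nhds x
    obtain ⟨t, ht, hνt⟩ := ν.finiteAt_nhds x
    exact ⟨s ∩ t, inter_mem hs ht, ENNReal.add_lt_top.2
      ⟨(measure_mono Set.inter_subset_left).trans_lt hμs,
        (measure_mono Set.inter_subset_right).trans_lt hνt⟩⟩

theorem eq_withDensity_ofReal_of_integral_contDiff_eq [NormedSpace ℝ E] [FiniteDimensional ℝ E]
    {μ ν : Measure E} [IsLocallyFiniteMeasure μ] [IsLocallyFiniteMeasure ν] {f : E → ℝ}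
    (hf : Continuous f)
    (h : ∀ g : E → ℝ, ContDiff ℝ ∞ g → HasCompactSupport g →
      ∫ x, g x ∂μ = ∫ x, f x * g x ∂ν) :
    μ = ν.withDensity fun x => ENNReal.ofReal (f x) := by
  -- `μ + f⁻ ν = f⁺ ν`, while `f⁻ ν` and `f⁺ ν` are mutually singular, so that `f⁻ ν = 0`: the
  -- positivity of `f` is a consequence of the identity.
  set νpos := ν.withDensity fun x => ENNReal.ofReal (f x)
  set νneg := ν.withDensity fun x => ENNReal.ofReal (-f x)
  have : IsLocallyFiniteMeasure νpos := .withDensity_ofReal hf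
  have : IsLocallyFiniteMeasure νneg := .withDensity_ofReal hf.fun_neg
  have : IsLocallyFiniteMeasure (μ + νneg) := isLocallyFiniteMeasure_add
  have hadd : μ + νneg = νpos := by
    refine measure_ext_of_integral_contDiff_eq fun g hg hgc => ?_
    have hint (m : Measure E) [IsLocallyFiniteMeasure m] : Integrable g m :=
      hg.continuous.integrable_of_hasCompactSupport hgc
    have hmul {u : E → ℝ} (hu : Continuous u) : Integrable (fun x => u x * g x) ν :=
      (hu.mul hg.continuous).integrable_of_hasCompactSupport hgc.mul_left
    have hdens {u : E → ℝ} (hu : Continuous u) :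
        ∫ x, g x ∂ν.withDensity (fun x => ENNReal.ofReal (u x)) = ∫ x, max (u x) 0 * g x ∂ν := by
      rw [integral_withDensity_eq_integral_toReal_smul (by fun_prop) (by simp)]
      simp only [ENNReal.toReal_ofReal', smul_eq_mul]
    rw [integral_add_measure (hint μ) (hint νneg), h g hg hgc, hdens hf, hdens hf.fun_neg,
      ← integral_add (hmul hf) (hmul (by fun_prop))]
    congr with x
    rw [← add_mul]
    congr 1
    linarith [max_zero_sub_max_neg_zero_eq_self (f x)]
  have hneg : νneg = 0 := Measure.eq_zero_of_absolutelyContinuous_of_mutuallySingular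
    ((Measure.le_add_left le_rfl).trans hadd.le).absolutelyContinuous
    (withDensity_ofReal_mutuallySingular hf.measurable).symm
  rw [← hadd, hneg, add_zero]

variable [InnerProductSpace ℝ E] {μ : Measure E}

theorem integral_fourierInv_eq_integral_charFun_smul [FiniteDimensional ℝ E] [IsFiniteMeasure μ]
    {F : Type*} [NormedAddCommGroup F] [NormedSpace ℂ F] [CompleteSpace F]
    {g : E → F} (hg : Integrable g) :
    ∫ x, 𝓕⁻ g x ∂μ = ∫ ξ, charFun μ ((2 * Real.pi) • ξ) • g ξ := by
  have hchar (ξ : E) : charFun μ ((2 * Real.pi) • ξ) =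
      VectorFourier.fourierIntegral Real.fourierChar μ (-innerₗ E) 1 ξ := by
    simp only [charFun_apply, VectorFourier.fourierIntegral, Real.fourierChar_apply',
      Circle.smul_def, Circle.coe_exp, inner_smul_right]
    simp
  have hflip := VectorFourier.integral_fourierIntegral_smul_eq_flip (μ := μ) (L := -innerₗ E)
    (f := 1) Real.continuous_fourierChar (by exact continuous_inner.neg) (integrable_const 1) hg
  simp only [hchar, hflip, Pi.one_apply, one_smul]
  congr with x
  simp [Real.fourierInv_eq, VectorFourier.fourierIntegral, real_inner_comm]

/-- The density given by Fourier inversion to a finite measure `μ` with integrable characteristic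
function. It is `(2π)⁻ⁿ ∫ exp (-i ⟪x, t⟫) charFun μ t dt` after the substitution `t = 2πξ` adapted
to the normalization of `𝓕`; the real part only serves to make it real-valued. -/
def charFunDensity [FiniteDimensional ℝ E] (μ : Measure E) (x : E) : ℝ :=
  (𝓕 (fun ξ : E => charFun μ ((2 * Real.pi) • ξ)) x).re

variable [FiniteDimensional ℝ E]

theorem abs_charFunDensity_le (μ : Measure E) (x : E) :
    |charFunDensity μ x| ≤ ∫ ξ, ‖charFun μ ((2 * Real.pi) • ξ)‖ :=
  (Complex.abs_re_le_norm _).trans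
    (VectorFourier.norm_fourierIntegral_le_integral_norm _ _ _ _ _)

theorem contDiff_charFunDensity {N : ℕ∞}
    (h : ∀ n : ℕ, n ≤ N → Integrable fun t => ‖t‖ ^ n * ‖charFun μ t‖) :
    ContDiff ℝ N (charFunDensity μ) := by
  refine Complex.reCLM.contDiff.comp (Real.contDiff_fourier fun n hn => ?_)
  have hscale := ((h n hn).comp_smul Real.two_pi_pos.ne').const_mul ((2 * Real.pi) ^ n)⁻¹
  refine hscale.congr (ae_of_all _ fun ξ => ?_)
  simp only [norm_smul, mul_pow, Real.norm_of_nonneg Real.two_pi_pos.le]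
  field_simp

theorem eq_withDensity_charFunDensity [IsFiniteMeasure μ] (h : Integrable (charFun μ)) :
    μ = volume.withDensity fun x => ENNReal.ofReal (charFunDensity μ x) := by
  set φ : E → ℂ := fun ξ => charFun μ ((2 * Real.pi) • ξ)
  have hφ : Integrable φ := h.comp_smul Real.two_pi_pos.ne'
  have hcont : Continuous (𝓕 φ) := VectorFourier.fourierIntegral_continuous
    Real.continuous_fourierChar continuous_inner hφ
  refine eq_withDensity_ofReal_of_integral_contDiff_eq (Complex.continuous_re.comp hcont)
    fun g hg hgc => ?_
  have hgc' : HasCompactSupport (fun x => (g x : ℂ)) := hgc.comp_left Complex.ofReal_zero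
  have hg' : ContDiff ℝ ∞ (fun x => (g x : ℂ)) := Complex.ofRealCLM.contDiff.comp hg
  let G : SchwartzMap E ℂ := hgc'.toSchwartzMap hg'
  have hpair : ∫ x, (g x : ℂ) ∂μ = ∫ x, 𝓕 φ x * g x := calc
    ∫ x, G x ∂μ = ∫ x, 𝓕⁻ (𝓕 (G : E → ℂ)) x ∂μ := by
      rw [← SchwartzMap.fourier_coe, ← SchwartzMap.fourierInv_coe,
        FourierTransform.fourierInv_fourier_eq]
    _ = ∫ ξ, φ ξ • 𝓕 (G : E → ℂ) ξ :=
      integral_fourierInv_eq_integral_charFun_smul (𝓕 G).integrable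
    _ = ∫ x, 𝓕 φ x • G x := by
      simpa using! (VectorFourier.integral_fourierIntegral_smul_eq_flip (L := innerₗ E)
        Real.continuous_fourierChar continuous_inner hφ G.integrable).symm
  have hint : Integrable fun x => 𝓕 φ x * g x :=
    (hcont.mul hg'.continuous).integrable_of_hasCompactSupport hgc'.mul_left
  have hre := congrArg Complex.re hpair
  rw [integral_complex_ofReal, Complex.ofReal_re, ← RCLike.re_eq_complex_re,
    ← integral_re hint] at hre
  simpa [charFunDensity] using hre

theorem exists_contDiff_density_of_norm_charFun_le_exp
    [Nontrivial E] [IsFiniteMeasure μ] {c : ℝ} (hc : 0 < c)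
    (h : ∀ t, ‖charFun μ t‖ ≤ Real.exp (-c * min (‖t‖ ^ 2) ‖t‖)) :
    ∃ f : E → ℝ, ContDiff ℝ ∞ f ∧ (∃ M : ℝ, ∀ x, |f x| ≤ M) ∧
      μ = volume.withDensity fun x => ENNReal.ofReal (f x) := by
  have hmeas : AEStronglyMeasurable (charFun μ) := measurable_charFun.aestronglyMeasurable
  have hdecay := integrable_norm_pow_mul_norm_of_norm_le_exp hmeas hc h
  exact ⟨charFunDensity μ, contDiff_charFunDensity fun n _ => hdecay n,
    ⟨_, abs_charFunDensity_le μ⟩,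
    eq_withDensity_charFunDensity ((integrable_norm_iff hmeas).1 (by simpa using hdecay 0))⟩

end Density

section Probability

variable {Ω : Type*} [MeasurableSpace Ω] {P : Measure Ω}

theorem charFun_map_eq_integral_exp {X : Ω → ℝ} (hX : AEMeasurable X P) (t : ℝ) :
    charFun (P.map X) t = ∫ ω, Complex.exp (Complex.I * t * (X ω : ℝ)) ∂P := by
  rw [charFun_apply_real, integral_map hX (by fun_prop)]
  congr with ω
  ring_nf

theorem tendsto_charFun_map_of_ae_tendsto {E : Type*} [NormedAddCommGroup E]
    [InnerProductSpace ℝ E] [FiniteDimensional ℝ E] [MeasurableSpace E] [BorelSpace E]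
    [IsProbabilityMeasure P] {X : ℕ → Ω → E} {Z : Ω → E} (hX : ∀ n, AEMeasurable (X n) P)
    (h : ∀ᵐ ω ∂P, Tendsto (fun n => X n ω) atTop (𝓝 (Z ω))) (t : E) :
    Tendsto (fun n => charFun (P.map (X n)) t) atTop (𝓝 (charFun (P.map Z) t)) :=
  ProbabilityMeasure.tendsto_iff_tendsto_charFun.1 (tendstoInDistribution_of_ae_tendsto hX
    (aemeasurable_of_tendsto_metrizable_ae' hX h) h).tendsto t

theorem norm_charFun_map_sum_le_prod_of_subset {E : Type*} [NormedAddCommGroup E]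
    [InnerProductSpace ℝ E] [SecondCountableTopology E] [MeasurableSpace E] [BorelSpace E]
    [IsProbabilityMeasure P] {ι : Type*} {X : ι → Ω → E}
    (hX : ∀ i, AEMeasurable (X i) P) (hindep : iIndepFun X P) {s t : Finset ι} (hts : t ⊆ s)
    (u : E) :
    ‖charFun (P.map fun ω => ∑ i ∈ s, X i ω) u‖ ≤ ∏ i ∈ t, ‖charFun (P.map (X i)) u‖ := by
  have hprob (i : ι) : IsProbabilityMeasure (P.map (X i)) :=
    Measure.isProbabilityMeasure_map (hX i)
  rw [iIndepFun.charFun_map_fun_finsetSum_eq_prod (fun i _ => hX i) (hindep.restrict s),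
    Finset.prod_apply, norm_prod]
  exact prod_le_prod_of_subset_of_le_one hts (fun _ _ => norm_nonneg _) fun _ _ _ =>
    norm_charFun_le_one u

theorem integral_sq_mean_le [IsProbabilityMeasure P] {ι : Type*} {X : ι → Ω → ℝ} {s : Finset ι}
    (hL2 : ∀ i ∈ s, MemLp (X i) 2 P) (hmean : ∀ i ∈ s, ∫ ω, X i ω ∂P = 0)
    (hindep : (s : Set ι).Pairwise fun i j => X i ⟂ᵢ[P] X j) {C : ℝ}
    (hC : ∀ i ∈ s, ∫ ω, X i ω ^ 2 ∂P ≤ C) :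
    ∫ ω, ((#s : ℝ)⁻¹ * ∑ i ∈ s, X i ω) ^ 2 ∂P ≤ C / #s := by
  have hsum_mean : ∫ ω, (∑ i ∈ s, X i) ω ∂P = 0 := by
    simp only [Finset.sum_apply]
    rw [integral_finsetSum _ fun i hi => (hL2 i hi).integrable one_le_two]
    exact sum_eq_zero hmean
  have hvar : ∫ ω, (∑ i ∈ s, X i ω) ^ 2 ∂P = ∑ i ∈ s, ∫ ω, X i ω ^ 2 ∂P := by
    have h := IndepFun.variance_sum hL2 hindep
    rw [variance_of_integral_eq_zero (memLp_finsetSum' _ hL2).aemeasurable hsum_mean,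
      sum_congr rfl fun i hi =>
        variance_of_integral_eq_zero (hL2 i hi).aemeasurable (hmean i hi)] at h
    simpa only [Finset.sum_apply] using h
  calc ∫ ω, ((#s : ℝ)⁻¹ * ∑ i ∈ s, X i ω) ^ 2 ∂P
      = (#s : ℝ)⁻¹ ^ 2 * ∑ i ∈ s, ∫ ω, X i ω ^ 2 ∂P := by
        simp only [mul_pow, integral_const_mul, hvar]
    _ ≤ (#s : ℝ)⁻¹ ^ 2 * (#s * C) := by
        gcongr
        simpa using sum_le_card_nsmul s _ C hC
    _ = C / #s := by
        rcases eq_or_ne (#s : ℝ) 0 with h | h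
        · simp [h]
        · field_simp

theorem eLpNorm_two_eq_ofReal_sqrt_integral_sq {X : Ω → ℝ} (hX : MemLp X 2 P) :
    eLpNorm X 2 P = ENNReal.ofReal √(∫ ω, X ω ^ 2 ∂P) := by
  simp [hX.eLpNorm_eq_integral_rpow_norm two_ne_zero ENNReal.ofNat_ne_top, Real.sqrt_eq_rpow]

end Probability

section Sphere

variable {d : ℕ}

theorem sphereW_succ (d n : ℕ) : sphereW d (n + 1) =
    (univ : Finset (Fin (d + 1) × (Fin n → Fin d))).image (fun x => (x.1, List.ofFn x.2)) :=
  rfl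

theorem sphereW_map_injective (d n : ℕ) :
    Function.Injective (fun x : Fin (d + 1) × (Fin n → Fin d) =>
      ((x.1, List.ofFn x.2) : Vertex d)) :=
  Function.injective_id.prodMap List.ofFn_injective

theorem sum_sphereW_succ_s15 {M : Type*} [AddCommMonoid M] (n : ℕ) (F : Vertex d → M) :
    ∑ v ∈ sphereW d (n + 1), F v =
      ∑ a : Fin (d + 1), ∑ x : Fin n → Fin d, F (a, List.ofFn x) := by
  rw [sphereW_succ, sum_image (sphereW_map_injective d n).injOn,
    ← Fintype.sum_prod_type' (fun a x => F (a, List.ofFn x))]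

theorem sum_ofFn_succ {α M : Type*} [Fintype α] [AddCommMonoid M] (n : ℕ) (F : List α → M) :
    ∑ x : Fin (n + 1) → α, F (List.ofFn x) =
      ∑ x : Fin n → α, ∑ b : α, F (List.ofFn x ++ [b]) := by
  rw [sum_comm, ← Fintype.sum_prod_type', ← (Fin.snocEquiv fun _ : Fin (n + 1) => α).sum_comp]
  simp [List.ofFn_succ_last, -List.ofFn_succ, Fin.snocEquiv]

theorem sum_sphereW_succ_succ {M : Type*} [AddCommMonoid M] (n : ℕ) (F : Vertex d → M) :
    ∑ v ∈ sphereW d (n + 2), F v =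
      ∑ v ∈ sphereW d (n + 1), ∑ b : Fin d, F (v.1, v.2 ++ [b]) := by
  rw [sum_sphereW_succ_s15, sum_sphereW_succ_s15]
  exact sum_congr rfl fun a _ => sum_ofFn_succ n fun l => F (a, l)

theorem card_sphereW_succ (d n : ℕ) : #(sphereW d (n + 1)) = (d + 1) * d ^ n := by
  rw [sphereW_succ, card_image_of_injective _ (sphereW_map_injective d n)]
  simp

theorem card_sphereW_succ_pos (hd : 0 < d) (n : ℕ) : 0 < #(sphereW d (n + 1)) := by
  rw [card_sphereW_succ]
  positivity

theorem vdepth_of_mem_sphereW_succ {n : ℕ} {v : Vertex d} (hv : v ∈ sphereW d (n + 1)) :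
    vdepth v = n + 1 := by
  obtain ⟨x, -, rfl⟩ := mem_image.1 hv
  simp [vdepth]

theorem exists_le_card_sphereW_succ (hd : 2 ≤ d) (x : ℝ) :
    ∃ n : ℕ, x ≤ #(sphereW d (n + 1)) ∧ (n = 0 ∨ #(sphereW d (n + 1)) ≤ d * x) := by
  simp only [card_sphereW_succ, Nat.cast_mul, Nat.cast_pow, Nat.cast_add, Nat.cast_one]
  have hd1 : (0 : ℝ) < d + 1 := by positivity
  rcases le_or_gt x (d + 1) with hx | hx
  · exact ⟨0, by simpa using hx, .inl rfl⟩
  · obtain ⟨n, hn, hn'⟩ :=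
      exists_nat_pow_near ((one_le_div hd1).2 hx.le) (Nat.one_lt_cast.2 hd : (1 : ℝ) < d)
    rw [le_div_iff₀' hd1] at hn
    rw [div_lt_iff₀' hd1] at hn'
    refine ⟨n + 1, hn'.le, .inr ?_⟩
    rw [pow_succ', mul_left_comm]
    gcongr

end Sphere

section SphericalAverage

/-- The average of the increments over the sphere `W_r`, as opposed to the average `sphAvg` of the
heights. Like `sphereW`, it is meaningful for `r ≥ 1` only. -/
def sphereMean (d : ℕ) {Ω : Type*} (Y : Vertex d → Ω → ℝ) (r : ℕ) (ω : Ω) : ℝ :=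
  (#(sphereW d r) : ℝ)⁻¹ * ∑ v ∈ sphereW d r, Y v ω

/-- The vertices of depth between `1` and `n`. -/
def puncturedBall (d n : ℕ) : Finset (Vertex d) :=
  (range n).biUnion fun k => sphereW d (k + 1)

variable {Ω : Type*} {d : ℕ} (Y : Vertex d → Ω → ℝ)

theorem heightAt_append_singleton (a : Fin (d + 1)) (l : List (Fin d)) (b : Fin d) (ω : Ω) :
    heightAt Y (a, l ++ [b]) ω = heightAt Y (a, l) ω + Y (a, l ++ [b]) ω := by
  simp only [heightAt, List.length_append, List.length_singleton]
  rw [sum_range_succ, List.take_of_length_le (by simp)]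
  congr 1
  refine sum_congr rfl fun k hk => ?_
  rw [List.take_append_of_le_length (mem_range_succ_iff.1 hk)]

theorem sum_heightAt_sphereW_succ_succ (n : ℕ) (ω : Ω) :
    ∑ v ∈ sphereW d (n + 2), heightAt Y v ω =
      d * ∑ v ∈ sphereW d (n + 1), heightAt Y v ω + ∑ v ∈ sphereW d (n + 2), Y v ω := by
  simp only [sum_sphereW_succ_succ, heightAt_append_singleton, sum_add_distrib, sum_const,
    card_univ, Fintype.card_fin, nsmul_eq_mul, mul_sum]

theorem sphAvg_one (ω : Ω) : sphAvg d Y 1 ω = sphereMean d Y 1 ω := by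
  simp [sphAvg, sphereMean, card_sphereW_succ d 0, sum_sphereW_succ_s15 0, heightAt]

theorem sphAvg_succ_succ (hd : 0 < d) (n : ℕ) (ω : Ω) :
    sphAvg d Y (n + 2) ω = sphAvg d Y (n + 1) ω + sphereMean d Y (n + 2) ω := by
  have hd' : (d : ℝ) ≠ 0 := Nat.cast_ne_zero.2 hd.ne'
  simp only [sphAvg, sphereMean, card_sphereW_succ, sum_heightAt_sphereW_succ_succ,
    Nat.add_succ_sub_one, add_zero, Nat.cast_mul, Nat.cast_pow, pow_succ]
  field_simp

theorem sphAvg_succ_eq_sum_sphereMean (hd : 0 < d) (n : ℕ) (ω : Ω) :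
    sphAvg d Y (n + 1) ω = ∑ k ∈ range (n + 1), sphereMean d Y (k + 1) ω := by
  induction n with
  | zero => simp [sphAvg_one]
  | succ n ih => rw [sphAvg_succ_succ Y hd, ih, sum_range_succ _ (n + 1)]

theorem sphAvg_succ_eq_sum_puncturedBall (hd : 0 < d) (n : ℕ) (ω : Ω) :
    sphAvg d Y (n + 1) ω =
      ∑ v ∈ puncturedBall d (n + 1), (#(sphereW d (vdepth v)) : ℝ)⁻¹ * Y v ω := by
  rw [sphAvg_succ_eq_sum_sphereMean Y hd, puncturedBall, sum_biUnion]
  · refine sum_congr rfl fun k _ => ?_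
    rw [sphereMean, mul_sum]
    exact sum_congr rfl fun v hv => by rw [vdepth_of_mem_sphereW_succ hv]
  · intro i _ j _ hij
    refine Finset.disjoint_left.2 fun v hi hj => hij (Nat.succ_injective ?_)
    exact (vdepth_of_mem_sphereW_succ hi).symm.trans (vdepth_of_mem_sphereW_succ hj)

end SphericalAverage

section RandomIncrements

variable {Ω : Type*} [MeasurableSpace Ω] {P : Measure Ω} {d : ℕ} {Y : Vertex d → Ω → ℝ}

theorem aemeasurable_sphAvg (hY : ∀ v, AEMeasurable (Y v) P) (r : ℕ) :
    AEMeasurable (sphAvg d Y r) P :=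
  (Finset.aemeasurable_fun_sum _ fun _ _ =>
    Finset.aemeasurable_fun_sum _ fun _ _ => hY _).const_mul _

theorem memLp_sphereMean (hL2 : ∀ v, MemLp (Y v) 2 P) (r : ℕ) : MemLp (sphereMean d Y r) 2 P :=
  (memLp_finsetSum _ fun v _ => hL2 v).const_mul _

variable [IsProbabilityMeasure P]

theorem eLpNorm_sphereMean_le (hindep : Pairwise fun v w => Y v ⟂ᵢ[P] Y w)
    (hL2 : ∀ v, MemLp (Y v) 2 P) (hmean : ∀ v, ∫ ω, Y v ω ∂P = 0)
    {C : ℝ} (hC : ∀ v, ∫ ω, Y v ω ^ 2 ∂P ≤ C) (r : ℕ) :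
    eLpNorm (sphereMean d Y r) 2 P ≤ ENNReal.ofReal √(C / #(sphereW d r)) := by
  rw [eLpNorm_two_eq_ofReal_sqrt_integral_sq (memLp_sphereMean hL2 r)]
  gcongr
  exact integral_sq_mean_le (fun v _ => hL2 v) (fun v _ => hmean v) (hindep.set_pairwise _)
    fun v _ => hC v

theorem summable_sqrt_div_card_sphereW_succ (hd : 2 ≤ d) (C : ℝ) :
    Summable fun n => √(C / #(sphereW d (n + 1))) := by
  have hgeom (n : ℕ) : √(C / #(sphereW d (n + 1))) = √(C / (d + 1)) * (√(d : ℝ)⁻¹) ^ n := calc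
    _ = √(C / (d + 1) * ((√(d : ℝ)⁻¹) ^ n) ^ 2) := by
      rw [← pow_mul, mul_comm n, pow_mul, Real.sq_sqrt (by positivity), card_sphereW_succ]
      congr 1
      push_cast
      rw [inv_pow, ← div_eq_mul_inv, div_div]
    _ = _ := by rw [Real.sqrt_mul' _ (by positivity), Real.sqrt_sq (by positivity)]
  simp only [hgeom]
  refine (summable_geometric_of_lt_one (by positivity) ?_).mul_left _
  rw [Real.sqrt_lt' one_pos, one_pow]
  exact inv_lt_one_of_one_lt₀ (Nat.one_lt_cast.2 hd)

theorem ae_exists_tendsto_sphAvg (hd : 2 ≤ d) (hindep : Pairwise fun v w => Y v ⟂ᵢ[P] Y w)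
    (hL2 : ∀ v, MemLp (Y v) 2 P) (hmean : ∀ v, ∫ ω, Y v ω ∂P = 0)
    {C : ℝ} (hC : ∀ v, ∫ ω, Y v ω ^ 2 ∂P ≤ C) :
    ∀ᵐ ω ∂P, ∃ h : ℝ, Tendsto (fun r => sphAvg d Y r ω) atTop (𝓝 h) := by
  have htop : ∑' n, eLpNorm (sphereMean d Y (n + 1)) 2 P ≠ ⊤ :=
    ne_top_of_le_ne_top (summable_sqrt_div_card_sphereW_succ hd C).tsum_ofReal_ne_top
      (ENNReal.tsum_le_tsum fun n => eLpNorm_sphereMean_le hindep hL2 hmean hC (n + 1))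
  filter_upwards [summable_norm_of_tsum_eLpNorm_ne_top one_le_two
    (fun n => (memLp_sphereMean hL2 (n + 1)).aestronglyMeasurable) htop] with ω hω
  refine ⟨∑' n, sphereMean d Y (n + 1) ω, (tendsto_add_atTop_iff_nat 1).1 ?_⟩
  simp only [sphAvg_succ_eq_sum_sphereMean Y (two_pos.trans_le hd)]
  exact (tendsto_add_atTop_iff_nat 1).2 hω.of_norm.hasSum.tendsto_sum_nat

theorem norm_charFun_map_sphAvg_le_prod (hd : 0 < d) (hY : ∀ v, AEMeasurable (Y v) P)
    (hindep : iIndepFun Y P) {k n : ℕ} (hkn : k ≤ n) (t : ℝ) :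
    ‖charFun (P.map (sphAvg d Y (n + 1))) t‖ ≤
      ∏ v ∈ sphereW d (k + 1), ‖charFun (P.map (Y v)) ((#(sphereW d (k + 1)) : ℝ)⁻¹ * t)‖ := by
  have hsub : sphereW d (k + 1) ⊆ puncturedBall d (n + 1) :=
    subset_biUnion_of_mem (fun k => sphereW d (k + 1)) (mem_range_succ_iff.2 hkn)
  rw [funext (sphAvg_succ_eq_sum_puncturedBall Y hd n)]
  refine (norm_charFun_map_sum_le_prod_of_subset (fun v => (hY v).const_mul _)
    (hindep.comp _ fun v => measurable_const_mul _) hsub t).trans_eq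
    (prod_congr rfl fun v hv => ?_)
  rw [charFun_map_mul_comp (hY v), vdepth_of_mem_sphereW_succ hv]

variable {H : Ω → ℝ} (hH : ∀ᵐ ω ∂P, Tendsto (fun r => sphAvg d Y r ω) atTop (𝓝 (H ω)))
include hH

theorem norm_charFun_map_limit_le_prod (hd : 0 < d) (hY : ∀ v, AEMeasurable (Y v) P)
    (hindep : iIndepFun Y P) (k : ℕ) (t : ℝ) :
    ‖charFun (P.map H) t‖ ≤
      ∏ v ∈ sphereW d (k + 1), ‖charFun (P.map (Y v)) ((#(sphereW d (k + 1)) : ℝ)⁻¹ * t)‖ := by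
  have hlim := tendsto_charFun_map_of_ae_tendsto (aemeasurable_sphAvg hY) hH t
  refine le_of_tendsto ((tendsto_add_atTop_iff_nat 1).2 hlim).norm ?_
  filter_upwards [eventually_ge_atTop k] with n hn
  exact norm_charFun_map_sphAvg_le_prod hd hY hindep hn t

variable {cbar δ : ℝ}
  (hgauss : ∀ v, ∀ s : ℝ, |s| ≤ δ → ‖charFun (P.map (Y v)) s‖ ≤ Real.exp (-cbar * s ^ 2))
include hgauss

theorem norm_charFun_map_limit_le_exp_div_card (hd : 0 < d) (hY : ∀ v, AEMeasurable (Y v) P)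
    (hindep : iIndepFun Y P) {k : ℕ} {t : ℝ} (ht : |t| ≤ δ * #(sphereW d (k + 1))) :
    ‖charFun (P.map H) t‖ ≤ Real.exp (-(cbar * t ^ 2 / #(sphereW d (k + 1)))) := by
  set N := #(sphereW d (k + 1))
  have hN : (0 : ℝ) < N := Nat.cast_pos.2 (card_sphereW_succ_pos hd k)
  have hs : |(N : ℝ)⁻¹ * t| ≤ δ := by
    rwa [abs_mul, abs_of_pos (inv_pos.2 hN), inv_mul_le_iff₀' hN]
  calc ‖charFun (P.map H) t‖
      ≤ ∏ v ∈ sphereW d (k + 1), ‖charFun (P.map (Y v)) ((N : ℝ)⁻¹ * t)‖ :=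
        norm_charFun_map_limit_le_prod hH hd hY hindep k t
    _ ≤ Real.exp (-cbar * ((N : ℝ)⁻¹ * t) ^ 2) ^ N :=
        (prod_le_prod (fun _ _ => norm_nonneg _) fun v _ => hgauss v _ hs).trans_eq (prod_const _)
    _ = Real.exp (-(cbar * t ^ 2 / N)) := by
        rw [← Real.exp_nat_mul]
        congr 1
        field_simp

theorem norm_charFun_map_limit_le_exp_min (hd : 2 ≤ d) (hY : ∀ v, AEMeasurable (Y v) P)
    (hindep : iIndepFun Y P) (hcbar : 0 ≤ cbar) (hδ : 0 < δ) (t : ℝ) :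
    ‖charFun (P.map H) t‖ ≤
      Real.exp (-min (cbar / (d + 1)) (cbar * δ / d) * min (t ^ 2) |t|) := by
  obtain ⟨k, htN, hk⟩ := exists_le_card_sphereW_succ hd (|t| / δ)
  set N := #(sphereW d (k + 1))
  have hN : (0 : ℝ) < N := Nat.cast_pos.2 (card_sphereW_succ_pos (two_pos.trans_le hd) k)
  rw [div_le_iff₀' hδ] at htN
  refine (norm_charFun_map_limit_le_exp_div_card hH hgauss (two_pos.trans_le hd) hY hindep
    htN).trans (Real.exp_le_exp.2 ?_)
  rw [neg_mul, neg_le_neg_iff]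
  have hc : 0 ≤ min (cbar / (d + 1)) (cbar * δ / d) := by positivity
  rcases hk with rfl | hk
  · calc min (cbar / (d + 1)) (cbar * δ / d) * min (t ^ 2) |t|
        ≤ cbar / (d + 1) * t ^ 2 := by gcongr <;> exact min_le_left _ _
      _ = cbar * t ^ 2 / N := by simp [N, card_sphereW_succ, div_mul_eq_mul_div]
  · have hd' : (0 : ℝ) < d := by positivity
    have ht : 0 < |t| := by
      contrapose! hk
      simpa [le_antisymm hk (abs_nonneg t)] using hN
    calc min (cbar / (d + 1)) (cbar * δ / d) * min (t ^ 2) |t|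
        ≤ cbar * δ / d * |t| := by gcongr <;> exact min_le_right _ _
      _ = cbar * t ^ 2 / (d * (|t| / δ)) := by
        rw [← sq_abs t]
        field_simp
      _ ≤ cbar * t ^ 2 / N := by gcongr

end RandomIncrements

/-- Independent centered increments with uniformly bounded second moments
and a uniform characteristic-function bound `ψ⋆ ≤ exp(-c̄s²)` near `0`: the a.s. limit `H` of
the spherical averages exists, its characteristic function satisfies
`|E[e^{itH}]| ≤ exp(-c·min(t²,|t|))` with the explicit `c > 0` below, and consequently the law
of `H` has a bounded `C^∞` Lebesgue density. -/
theorem independent_increments_smooth_density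
    {Ω : Type} [MeasurableSpace Ω] (P : Measure Ω) [IsProbabilityMeasure P]
    (d : ℕ) (hd : 2 ≤ d)
    (Y : Vertex d → Ω → ℝ) (hmeas : ∀ v, Measurable (Y v))
    (hindep : iIndepFun Y P)
    (hL2 : ∀ v, MemLp (Y v) 2 P)
    (hmean : ∀ v, ∫ ω, Y v ω ∂P = 0)
    (C : ℝ) (hC : 0 ≤ C) (hvar : ∀ v, ∫ ω, (Y v ω) ^ 2 ∂P ≤ C)
    (ψstar : ℝ → ℝ) (hψ01 : ∀ s, 0 ≤ ψstar s ∧ ψstar s ≤ 1)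
    (hψ : ∀ v, ∀ s : ℝ,
      ‖∫ ω, Complex.exp (Complex.I * s * (Y v ω : ℝ)) ∂P‖ ≤ ψstar s)
    (cbar δ : ℝ) (hcbar : 0 < cbar) (hδ : 0 < δ)
    (hψgauss : ∀ s : ℝ, |s| ≤ δ → ψstar s ≤ Real.exp (-cbar * s ^ 2)) :
    ∃ H : Ω → ℝ,
      (∀ᵐ ω ∂P, Tendsto (fun r => sphAvg d Y r ω) atTop (𝓝 (H ω))) ∧
      (0 < min (cbar / (((d : ℝ) + 1) * ((d : ℝ) - 1))) (cbar * δ / ((d : ℝ) * ((d : ℝ) - 1)))) ∧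
      (∀ t : ℝ,
        ‖∫ ω, Complex.exp (Complex.I * t * (H ω : ℝ)) ∂P‖ ≤
          Real.exp (-(min (cbar / (((d : ℝ) + 1) * ((d : ℝ) - 1)))
              (cbar * δ / ((d : ℝ) * ((d : ℝ) - 1)))) * min (t ^ 2) |t|)) ∧
      ∃ f : ℝ → ℝ,
        ContDiff ℝ (⊤ : ℕ∞) f ∧
        (∃ M : ℝ, ∀ x, |f x| ≤ M) ∧
        Measure.map H P = volume.withDensity (fun x => ENNReal.ofReal (f x)) := by
  have hY (v : Vertex d) : AEMeasurable (Y v) P := (hmeas v).aemeasurable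
  obtain ⟨H, hHmeas, hH⟩ := measurable_limit_of_tendsto_metrizable_ae (aemeasurable_sphAvg hY)
    (ae_exists_tendsto_sphAvg hd (fun v w h => hindep.indepFun h) hL2 hmean hvar)
  have hgauss (v : Vertex d) (s : ℝ) (hs : |s| ≤ δ) :
      ‖charFun (P.map (Y v)) s‖ ≤ Real.exp (-cbar * s ^ 2) := by
    rw [charFun_map_eq_integral_exp (hY v)]
    exact (hψ v s).trans (hψgauss s hs)
  have hd1 : (1 : ℝ) ≤ d - 1 := by
    linarith [(Nat.ofNat_le_cast.2 hd : (2 : ℝ) ≤ d)]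
  set c := min (cbar / (((d : ℝ) + 1) * ((d : ℝ) - 1))) (cbar * δ / ((d : ℝ) * ((d : ℝ) - 1)))
  have hc : 0 < c := lt_min (by positivity) (by positivity)
  have hc_le : c ≤ min (cbar / (d + 1)) (cbar * δ / d) := by
    unfold c
    gcongr <;> exact le_mul_of_one_le_right (by positivity) hd1
  have hchar (t : ℝ) : ‖charFun (P.map H) t‖ ≤ Real.exp (-c * min (t ^ 2) |t|) :=
    (norm_charFun_map_limit_le_exp_min hH hgauss hd hY hindep hcbar.le hδ t).trans (by gcongr)
  refine ⟨H, hH, hc, fun t => ?_, exists_contDiff_density_of_norm_charFun_le_exp hc ?_⟩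
  · rw [← charFun_map_eq_integral_exp hHmeas.aemeasurable]
    exact hchar t
  · simpa only [Real.norm_eq_abs, sq_abs] using hchar
end
end
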